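/- arXiv:1303.0084 — 4 statements merged into one kernel-verified Lean document; each statement's English description precedes it below -/
import Mathlib

section
/- Let R be a commutative ring, d ≥ 1, and let M_1, …, M_d be n×n matrices over R. Define the block matrix A of size nd×nd, viewed as a d×d array of n×n blocks with blocks indexed by {0,…,d−1}, whose (i,j) block equals M_{i+1} if j ≡ i+1 (mod d) and equals the zero matrix otherwise. Then tr(A^d) = d · tr(M_1 M_2 ⋯ M_d). -/
/-!
Regard `A` as a `d × d` matrix over the ring of `n × n` matrices: each row `i` has a single nonzero
entry `M i`, in column `i + 1`. Hence `A ^ d` is diagonal, and its `i`-th diagonal entry is the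
product of the `M j` read cyclically from `j = i`. These `d` products are cyclic rotations of one
another, so they all have the same trace.
-/

open Matrix

section OrbitProd

variable {ι S : Type*} [Monoid S]

/-- The ordered product `w i * w (σ i) * ⋯ * w (σ^[k - 1] i)` of the first `k` weights met by the
orbit of `i` under `σ`. These products are the nonzero entries of the powers of
`weightedMapMatrix σ w`. -/
def orbitProd (σ : ι → ι) (w : ι → S) (k : ℕ) (i : ι) : S :=
  (List.ofFn fun t : Fin k => w (σ^[t] i)).prod

theorem orbitProd_zero (σ : ι → ι) (w : ι → S) : orbitProd σ w 0 = 1 := by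
  ext i
  simp [orbitProd]

theorem orbitProd_succ (σ : ι → ι) (w : ι → S) (k : ℕ) (i : ι) :
    orbitProd σ w (k + 1) i = w i * orbitProd σ w k (σ i) := by
  simp only [orbitProd, List.ofFn_succ, List.prod_cons, Fin.val_zero, Fin.val_succ,
    Function.iterate_zero_apply, Function.iterate_succ_apply]

theorem orbitProd_succ' (σ : ι → ι) (w : ι → S) (k : ℕ) (i : ι) :
    orbitProd σ w (k + 1) i = orbitProd σ w k i * w (σ^[k] i) := by
  simp only [orbitProd, List.ofFn_succ_last, List.prod_append, List.prod_singleton,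
    Fin.val_castSucc, Fin.val_last]

theorem map_orbitProd_apply_of_iterate_eq {T : Type*} {f : S → T}
    (hf : ∀ x y, f (x * y) = f (y * x)) (σ : ι → ι) (w : ι → S) {k : ℕ} {i : ι}
    (hi : σ^[k] i = i) : f (orbitProd σ w k (σ i)) = f (orbitProd σ w k i) := by
  cases k with
  | zero => simp only [orbitProd_zero, Pi.one_apply]
  | succ k =>
    calc f (orbitProd σ w (k + 1) (σ i))
        = f (orbitProd σ w k (σ i) * w i) := by
          rw [orbitProd_succ', ← Function.iterate_succ_apply, hi]
      _ = f (w i * orbitProd σ w k (σ i)) := hf _ _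
      _ = f (orbitProd σ w (k + 1) i) := by rw [orbitProd_succ]

end OrbitProd

section WeightedMapMatrix

variable {ι S : Type*} [DecidableEq ι]

/-- The matrix of a self-map `σ` with weights `w`: row `i` has the entry `w i` in column `σ i` and
zeros elsewhere. The weights may be matrices themselves, in which case this is a block matrix. -/
def weightedMapMatrix [Zero S] (σ : ι → ι) (w : ι → S) : Matrix ι ι S :=
  of fun i j => if j = σ i then w i else 0

theorem weightedMapMatrix_apply [Zero S] (σ : ι → ι) (w : ι → S) (i j : ι) :
    weightedMapMatrix σ w i j = if j = σ i then w i else 0 :=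
  rfl

theorem weightedMapMatrix_id [Zero S] (w : ι → S) : weightedMapMatrix id w = diagonal w := by
  ext i j
  simp only [weightedMapMatrix_apply, diagonal_apply, id_eq, eq_comm]

variable [Fintype ι]

theorem weightedMapMatrix_mul [NonUnitalNonAssocSemiring S] (σ τ : ι → ι) (w v : ι → S) :
    weightedMapMatrix σ w * weightedMapMatrix τ v =
      weightedMapMatrix (τ ∘ σ) fun i => w i * v (σ i) := by
  ext i j
  simp only [mul_apply, weightedMapMatrix_apply, ite_mul, zero_mul, Finset.sum_ite_eq',
    Finset.mem_univ, if_true]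
  rw [mul_ite, mul_zero, Function.comp_apply]

variable [Semiring S]

theorem weightedMapMatrix_pow (σ : ι → ι) (w : ι → S) (k : ℕ) :
    weightedMapMatrix σ w ^ k = weightedMapMatrix σ^[k] (orbitProd σ w k) := by
  induction k with
  | zero =>
    rw [pow_zero, Function.iterate_zero, orbitProd_zero, weightedMapMatrix_id, diagonal_one']
  | succ k ih =>
    rw [pow_succ, ih, weightedMapMatrix_mul, ← Function.iterate_succ']
    simp only [← orbitProd_succ']

theorem trace_weightedMapMatrix_pow_of_iterate_eq_id {σ : ι → ι} (w : ι → S) {k : ℕ}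
    (hσ : σ^[k] = id) : trace (weightedMapMatrix σ w ^ k) = ∑ i, orbitProd σ w k i := by
  rw [weightedMapMatrix_pow, hσ, weightedMapMatrix_id, trace_diagonal]

end WeightedMapMatrix

section CyclicShift

variable {d : ℕ} [NeZero d]

theorem val_add_one_iterate (k : ℕ) (i : Fin d) :
    (((· + 1)^[k] i : Fin d) : ℕ) = ((i : ℕ) + k) % d := by
  induction k with
  | zero => exact (Nat.mod_eq_of_lt i.isLt).symm
  | succ k ih =>
    rw [Function.iterate_succ_apply', Fin.val_add, ih, Fin.val_one', ← Nat.add_mod, add_assoc]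

theorem add_one_iterate_self : (· + 1 : Fin d → Fin d)^[d] = id := by
  ext i
  rw [val_add_one_iterate, Nat.add_mod_right, Nat.mod_eq_of_lt i.isLt, id_eq]

theorem add_one_iterate_zero (i : Fin d) : (· + 1)^[(i : ℕ)] (0 : Fin d) = i := by
  ext
  rw [val_add_one_iterate, Fin.val_zero, zero_add, Nat.mod_eq_of_lt i.isLt]

theorem orbitProd_add_one_zero {S : Type*} [Monoid S] (w : Fin d → S) :
    orbitProd (· + 1) w d 0 = (List.ofFn w).prod := by
  simp only [orbitProd, add_one_iterate_zero]

theorem map_orbitProd_add_one {S T : Type*} [Monoid S] {f : S → T}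
    (hf : ∀ x y, f (x * y) = f (y * x)) (w : Fin d → S) (i : Fin d) :
    f (orbitProd (· + 1) w d i) = f (List.ofFn w).prod := by
  have invariant (j : Fin d) :
      f (orbitProd (· + 1) w d (j + 1)) = f (orbitProd (· + 1) w d j) :=
    map_orbitProd_apply_of_iterate_eq hf (· + 1) w (congrFun add_one_iterate_self j)
  have along_orbit (k : ℕ) :
      f (orbitProd (· + 1) w d ((· + 1)^[k] 0)) = f (orbitProd (· + 1) w d 0) := by
    induction k with
    | zero => rfl
    | succ k ih => rw [Function.iterate_succ_apply', invariant, ih]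
  rw [← add_one_iterate_zero i, along_orbit, orbitProd_add_one_zero]

theorem map_trace_weightedMapMatrix_add_one_pow {S T : Type*} [Semiring S] [AddCommMonoid T]
    (f : S →+ T) (hf : ∀ x y, f (x * y) = f (y * x)) (w : Fin d → S) :
    f (trace (weightedMapMatrix (· + 1) w ^ d)) = d • f (List.ofFn w).prod := by
  rw [trace_weightedMapMatrix_pow_of_iterate_eq_id w add_one_iterate_self, map_sum]
  simp only [map_orbitProd_add_one hf, Finset.sum_const, Finset.card_univ, Fintype.card_fin]

end CyclicShift

theorem trace_comp {ι n R : Type*} [Fintype ι] [Fintype n] [AddCommMonoid R]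
    (B : Matrix ι ι (Matrix n n R)) : trace (comp ι ι n n R B) = trace (trace B) := by
  rw [trace, Fintype.sum_prod_type]
  exact (trace_sum Finset.univ B.diag).symm

theorem trace_comp_pow {ι n R : Type*} [Fintype ι] [DecidableEq ι] [Fintype n] [DecidableEq n]
    [Semiring R] (B : Matrix ι ι (Matrix n n R)) (k : ℕ) :
    trace (comp ι ι n n R B ^ k) = trace (trace (B ^ k)) := by
  rw [← trace_comp, ← compRingEquiv_apply, ← compRingEquiv_apply, map_pow]

theorem trace_pow_blockCyclic_eq_mul_trace_prod_general {R n : Type*} [CommSemiring R] [Fintype n]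
    [DecidableEq n] {d : ℕ} (M : Fin d → Matrix n n R) (A : Matrix (Fin d × n) (Fin d × n) R)
    (hA : ∀ (i j : Fin d) (a b : n),
      A (i, a) (j, b) = if (j : ℕ) = ((i : ℕ) + 1) % d then M i a b else 0) :
    trace (A ^ d) = (d : R) * trace (List.ofFn M).prod := by
  obtain rfl | hd := eq_zero_or_neZero d
  · simp
  have hA_comp : A = comp _ _ _ _ R (weightedMapMatrix (· + 1) M) := by
    ext ⟨i, a⟩ ⟨j, b⟩
    have hj : (j : ℕ) = ((i : ℕ) + 1) % d ↔ j = i + 1 := by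
      rw [Fin.ext_iff, Fin.val_add, Fin.val_one', Nat.add_mod_mod]
    simp only [hA, hj, comp_apply, weightedMapMatrix_apply]
    split_ifs <;> rfl
  rw [hA_comp, trace_comp_pow, ← nsmul_eq_mul]
  exact map_trace_weightedMapMatrix_add_one_pow (traceAddMonoidHom n R) trace_mul_comm M

/-- Let `R` be a commutative ring, `d ≥ 1`, and `M_1, …, M_d` be `n×n`
matrices over `R`.  Let `A` be the `nd×nd` block matrix (blocks indexed by `{0,…,d−1}`)
whose `(i,j)` block is `M_{i+1}` when `j ≡ i+1 (mod d)` and `0` otherwise.  Then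
`tr(A^d) = d · tr(M_1 ⋯ M_d)`. -/
theorem trace_pow_blockCyclic_eq_mul_trace_prod {R : Type*} [CommRing R] (n d : ℕ)
    (hd : 1 ≤ d) (M : Fin d → Matrix (Fin n) (Fin n) R)
    (A : Matrix (Fin d × Fin n) (Fin d × Fin n) R)
    (hA : ∀ (i j : Fin d) (a b : Fin n),
      A (i, a) (j, b) = if (j : ℕ) = ((i : ℕ) + 1) % d then M i a b else 0) :
    Matrix.trace (A ^ d) = (d : R) * Matrix.trace (List.ofFn M).prod :=
  trace_pow_blockCyclic_eq_mul_trace_prod_general M A hA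
end

section
/- Let F be a field of characteristic zero and let A and B be tuples of r matrices of size n×n over F. Then f(A) = f(B) for every invariant f ∈ F[M]^{GL_n(F)} if and only if f_ℓ(A, x) = f_ℓ(B, x) as polynomials in F[x_1,…,x_ℓ] for every ℓ ∈ {1,…,n²}. -/
/-- For a tuple `A = (A_0,…,A_{r−1})` of `n×n` matrices over `R`, the polynomial
`f_ℓ(A, x) := tr(A(x_1) ⋯ A(x_ℓ))` where `A(x) := Σ_{i<r} A_i x^i`. -/
noncomputable def fpoly {R : Type*} [CommRing R] (n r ℓ : ℕ)
    (A : Fin r → Matrix (Fin n) (Fin n) R) : MvPolynomial (Fin ℓ) R :=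
  Matrix.trace
    (List.ofFn fun j : Fin ℓ =>
      ∑ i : Fin r, (A i).map fun a => MvPolynomial.C a * MvPolynomial.X j ^ (i : ℕ)).prod

/-- The generic `n×n` matrix `M_i` whose entries are the indeterminates `X (i, a, b)`. -/
noncomputable def genMat (F : Type*) [Field F] (n r : ℕ) (i : Fin r) :
    Matrix (Fin n) (Fin n) (MvPolynomial (Fin r × Fin n × Fin n) F) :=
  Matrix.of fun a b => MvPolynomial.X (i, a, b)

/-- A polynomial `f` in the `n²r` entries of the tuple `M = (M_0,…,M_{r−1})` of generic
matrices is invariant under simultaneous conjugation if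
`f(M_0,…,M_{r−1}) = f(PM_0P⁻¹,…,PM_{r−1}P⁻¹)` as polynomials, for every `P ∈ GL_n(F)`. -/
def IsSimConjInvariant (F : Type*) [Field F] (n r : ℕ)
    (f : MvPolynomial (Fin r × Fin n × Fin n) F) : Prop :=
  ∀ P : GL (Fin n) F,
    MvPolynomial.aeval
      (fun v : Fin r × Fin n × Fin n =>
        ((((P : Matrix (Fin n) (Fin n) F)).map MvPolynomial.C * genMat F n r v.1 *
            (((P⁻¹ : GL (Fin n) F) : Matrix (Fin n) (Fin n) F)).map MvPolynomial.C :
          Matrix (Fin n) (Fin n) (MvPolynomial (Fin r × Fin n × Fin n) F)))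
          v.2.1 v.2.2) f = f

/-- Evaluation of a polynomial in the entries of the generic tuple at a concrete tuple. -/
noncomputable def evalTuple {F : Type*} [Field F] {n r : ℕ}
    (A : Fin r → Matrix (Fin n) (Fin n) F)
    (f : MvPolynomial (Fin r × Fin n × Fin n) F) : F :=
  MvPolynomial.eval (fun v => A v.1 v.2.1 v.2.2) f

/-!
The coefficients of `f_ℓ(A, x)` are the traces of the words of length `ℓ` in the `A_i`, and such a
trace is an invariant.

Words of length at most `n²` suffice: let `V` be the span of `1` and the pairs `(A_i, B_i)` in the
algebra `M_n × M_n` of dimension `2n²`. If some step of the chain `V^k` adds only one dimension,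
then from there on each step is generated by a power of a single `(A_i, B_i)`, whose minimal
polynomial has degree at most `2n ≤ n² + 1`; otherwise every step adds two dimensions. Either way
the chain is stationary from `V^(n²)` on.

Conversely, let `A` leave a subspace `W` invariant. Scaling `W` by `t` conjugates `A` to a tuple
which depends polynomially on `t` and at `t = 0` is the action on `W × Fⁿ ⧸ W`, so an invariant
takes the same value there. Hence `A` and `B` may be replaced by tuples acting semisimply. When all
traces of words agree, the two semisimple modules over the free algebra have the same character, so
they are isomorphic, which means that the tuples are conjugate.
-/

section SemisimpleTrace

variable {R M N : Type*} [Ring R] [AddCommGroup M] [Module R M] [AddCommGroup N] [Module R N]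

theorem isSemisimpleModule_prod [IsSemisimpleModule R M] [IsSemisimpleModule R N] :
    IsSemisimpleModule R (M × N) := by
  have hsup := IsSemisimpleModule.sup (IsSemisimpleModule.range (LinearMap.inl R M N))
    (IsSemisimpleModule.range (LinearMap.inr R M N))
  rw [LinearMap.sup_range_inl_inr] at hsup
  exact .congr Submodule.topEquiv.symm

theorem eq_zero_of_forall_linearMap_eq_zero [IsSemisimpleModule R M] [IsSemisimpleModule R N]
    (h : ∀ f : M →ₗ[R] N, f = 0) (g : N →ₗ[R] M) : g = 0 := by
  obtain ⟨s, hs⟩ := IsSemisimpleModule.lifting_property g.rangeRestrict g.surjective_rangeRestrict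
    LinearMap.id
  obtain ⟨t, ht⟩ := IsSemisimpleModule.extension_property (LinearMap.range g).subtype
    (Submodule.injective_subtype _) s
  have hs0 : s = 0 := by rw [← ht, h t, LinearMap.zero_comp]
  have hid : (LinearMap.id : LinearMap.range g →ₗ[R] LinearMap.range g) = 0 := by
    rw [← hs, hs0, LinearMap.comp_zero]
  ext x
  exact congrArg Subtype.val (LinearMap.congr_fun hid (g.rangeRestrict x))

/-- By the density theorem, `x` may be chosen to act as the projection of `M × N` onto `M`. -/
theorem exists_smul_eq_self_and_smul_eq_zero [IsSemisimpleModule R M] [IsSemisimpleModule R N]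
    [Module.Finite (Module.End R (M × N)) (M × N)] (h : ∀ f : M →ₗ[R] N, f = 0) :
    ∃ x : R, (∀ m : M, x • m = m) ∧ ∀ n : N, x • n = 0 := by
  have := isSemisimpleModule_prod (R := R) (M := M) (N := N)
  have h' := eq_zero_of_forall_linearMap_eq_zero h
  let proj : Module.End (Module.End R (M × N)) (M × N) :=
    { LinearMap.inl R M N ∘ₗ LinearMap.fst R M N with
      map_smul' := fun f y ↦ by
        have hfst : (f (0, y.2)).1 = 0 :=
          LinearMap.congr_fun (h' (LinearMap.fst R M N ∘ₗ f ∘ₗ LinearMap.inr R M N)) y.2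
        have hsnd : (f (y.1, 0)).2 = 0 :=
          LinearMap.congr_fun (h (LinearMap.snd R M N ∘ₗ f ∘ₗ LinearMap.inl R M N)) y.1
        have hy : f y = f (y.1, 0) + f (0, y.2) := by simp [← map_add]
        ext <;> simp [hy, hfst, hsnd] }
  obtain ⟨x, hx⟩ := Module.Finite.toModuleEnd_moduleEnd_surjective proj
  exact ⟨x, fun m ↦ congrArg Prod.fst (LinearMap.congr_fun hx (m, 0)),
    fun n ↦ congrArg Prod.snd (LinearMap.congr_fun hx (0, n))⟩

theorem exists_isCompl_range_and_forall_ker_linearMap_eq_zero [IsSemisimpleModule R M]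
    [IsSemisimpleModule R N] [IsArtinian R M] :
    ∃ (f : M →ₗ[R] N) (q : Submodule R N), IsCompl q (LinearMap.range f) ∧
      ∀ g : LinearMap.ker f →ₗ[R] q, g = 0 := by
  obtain ⟨f, -, hmin⟩ := WellFounded.has_min
    (InvImage.wf (fun f : M →ₗ[R] N ↦ LinearMap.ker f) wellFounded_lt) Set.univ ⟨0, trivial⟩
  obtain ⟨q, hq⟩ := exists_isCompl (LinearMap.range f)
  obtain ⟨p, hp⟩ := exists_isCompl (LinearMap.ker f)
  refine ⟨f, q, hq.symm, fun g ↦ by_contra fun hg ↦ hmin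
    (f + q.subtype ∘ₗ g ∘ₗ (LinearMap.ker f).projectionOnto p hp) trivial ?_⟩
  let π := (LinearMap.ker f).projectionOnto p hp
  have hker (x : M) (hx : f x + g (π x) = 0) : f x = 0 ∧ g (π x) = 0 := by
    have hfx : f x = 0 := Submodule.disjoint_def.mp hq.disjoint _ ⟨x, rfl⟩ <|
      eq_neg_of_add_eq_zero_left hx ▸ q.neg_mem (g (π x)).2
    exact ⟨hfx, by simpa [hfx] using hx⟩
  refine lt_of_le_of_ne (fun x hx ↦ (hker x hx).1) fun heq ↦ hg ?_
  ext x
  have hx : (x : M) ∈ LinearMap.ker (f + q.subtype ∘ₗ g ∘ₗ π) := heq.ge x.2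
  simpa [π] using (hker x hx).2

variable {F : Type*} [Field F] [Algebra F R] [Module F M] [IsScalarTower F R M]
  [Module F N] [IsScalarTower F R N]

/-- The character of an `R`-module `M`, where `R` is an `F`-algebra: the trace over `F` of the
action of `x` on `M`. -/
noncomputable def actionTrace (F M : Type*) {R : Type*} [Field F] [Ring R] [Algebra F R]
    [AddCommGroup M] [Module F M] [Module R M] [IsScalarTower F R M] (x : R) : F :=
  LinearMap.trace F M (Algebra.lsmul F F M x)

theorem actionTrace_congr (e : M ≃ₗ[R] N) (x : R) : actionTrace F M x = actionTrace F N x := by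
  rw [actionTrace, actionTrace, ← LinearMap.trace_conj' _ (e.restrictScalars F)]
  congr 1
  ext y
  simp [LinearEquiv.conj_apply]

theorem actionTrace_prod [FiniteDimensional F M] [FiniteDimensional F N] (x : R) :
    actionTrace F (M × N) x = actionTrace F M x + actionTrace F N x :=
  LinearMap.trace_prodMap' (Algebra.lsmul F F M x) (Algebra.lsmul F F N x)

theorem subsingleton_of_actionTrace_eq_of_forall_linearMap_eq_zero [FiniteDimensional F M]
    [FiniteDimensional F N] [IsSemisimpleModule R M] [IsSemisimpleModule R N]
    (hchar : ((Module.finrank F M).factorial : F) ≠ 0)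
    (htr : ∀ x : R, actionTrace F M x = actionTrace F N x) (h : ∀ f : M →ₗ[R] N, f = 0) :
    Subsingleton M := by
  have : Module.Finite (Module.End R (M × N)) (M × N) := .of_restrictScalars_finite F _ _
  obtain ⟨x, hxM, hxN⟩ := exists_smul_eq_self_and_smul_eq_zero h
  have hM : Algebra.lsmul F F M x = 1 := LinearMap.ext hxM
  have hN : Algebra.lsmul F F N x = 0 := LinearMap.ext hxN
  have hfinrank : (Module.finrank F M : F) = 0 := by
    simpa [actionTrace, hM, hN] using htr x
  by_contra hM'
  rw [← Module.finrank_eq_zero_iff_of_free (R := F)] at hM'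
  exact hchar (by
    rw [← Nat.mul_factorial_pred hM', Nat.cast_mul, hfinrank, zero_mul])

instance finite_submodule_of_isScalarTower [FiniteDimensional F M] (p : Submodule R M) :
    FiniteDimensional F p :=
  .of_injective (p.subtype.restrictScalars F) p.injective_subtype

theorem finrank_submodule_le_of_isScalarTower [FiniteDimensional F M] (p : Submodule R M) :
    Module.finrank F p ≤ Module.finrank F M :=
  LinearMap.finrank_le_finrank_of_injective (f := p.subtype.restrictScalars F) p.injective_subtype

theorem actionTrace_of_isCompl [FiniteDimensional F M] {p q : Submodule R M} (h : IsCompl p q)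
    (x : R) : actionTrace F M x = actionTrace F p x + actionTrace F q x := by
  rw [← actionTrace_prod, actionTrace_congr (Submodule.prodEquivOfIsCompl p q h)]

theorem nonempty_linearEquiv_of_actionTrace_eq [FiniteDimensional F M] [FiniteDimensional F N]
    [IsSemisimpleModule R M] [IsSemisimpleModule R N]
    (hM : ((Module.finrank F M).factorial : F) ≠ 0)
    (hN : ((Module.finrank F N).factorial : F) ≠ 0)
    (htr : ∀ x : R, actionTrace F M x = actionTrace F N x) : Nonempty (M ≃ₗ[R] N) := by
  have : IsArtinian R M := isArtinian_of_tower F inferInstance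
  obtain ⟨f, q, hq, hzero⟩ :=
    exists_isCompl_range_and_forall_ker_linearMap_eq_zero (R := R) (M := M) (N := N)
  obtain ⟨p, hp⟩ := exists_isCompl (LinearMap.ker f)
  have htr' (x : R) : actionTrace F (LinearMap.ker f) x = actionTrace F q x := by
    have e : p ≃ₗ[R] LinearMap.range f :=
      (Submodule.quotientEquivOfIsCompl _ p hp).symm ≪≫ₗ f.quotKerEquivRange
    have h := htr x
    rw [actionTrace_of_isCompl hp, actionTrace_of_isCompl hq, actionTrace_congr e] at h
    exact add_right_cancel h
  have hfac {k l : ℕ} (hl : (l.factorial : F) ≠ 0) (hkl : k ≤ l) : (k.factorial : F) ≠ 0 :=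
    (IsUnit.natCast_factorial_of_le hl.isUnit hkl).ne_zero
  have hker := subsingleton_of_actionTrace_eq_of_forall_linearMap_eq_zero
    (hfac hM (finrank_submodule_le_of_isScalarTower _)) htr' hzero
  have hq' := subsingleton_of_actionTrace_eq_of_forall_linearMap_eq_zero
    (hfac hN (finrank_submodule_le_of_isScalarTower _)) (fun x ↦ (htr' x).symm)
    (eq_zero_of_forall_linearMap_eq_zero hzero)
  rw [Submodule.subsingleton_iff_eq_bot] at hker hq'
  exact ⟨.ofBijective f ⟨LinearMap.ker_eq_bot.mp hker,
    LinearMap.range_eq_top.mp (by simpa [hq'] using hq.sup_eq_top)⟩⟩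

end SemisimpleTrace

section PowerFiltration

variable {K : Type*} [IdemSemiring K] {v d : K} {k m : ℕ}

theorem pow_le_of_pow_succ_le (hv : 1 ≤ v) (h : v ^ (k + 1) ≤ v ^ k) (m : ℕ) : v ^ m ≤ v ^ k := by
  induction m with
  | zero => simpa using one_le_pow_of_one_le' hv k
  | succ m ih => calc
      v ^ (m + 1) = v ^ m * v := pow_succ v m
      _ ≤ v ^ k * v := mul_le_mul_left ih v
      _ ≤ v ^ k := by rwa [← pow_succ]

theorem pow_succ_le_pow_sup_pow_of_le (hd : d ≤ v) (h : v ^ (k + 1) ≤ v ^ k ⊔ d ^ (k + 1))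
    (hkm : k ≤ m) : v ^ (m + 1) ≤ v ^ m ⊔ d ^ (m + 1) := by
  induction m, hkm using Nat.le_induction with
  | base => exact h
  | succ m _ ih =>
    have hdv : v * d ^ (m + 1) ≤ v ^ (m + 1) * d := by
      calc v * d ^ (m + 1) = v * d ^ m * d := by rw [pow_succ, mul_assoc]
        _ ≤ v * v ^ m * d := by gcongr
        _ = v ^ (m + 1) * d := by rw [pow_succ']
    calc v ^ (m + 2) = v * v ^ (m + 1) := pow_succ' v (m + 1)
      _ ≤ v * (v ^ m ⊔ d ^ (m + 1)) := by gcongr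
      _ = v ^ (m + 1) ⊔ v * d ^ (m + 1) := by
          rw [← add_eq_sup, ← add_eq_sup, mul_add, pow_succ' v m]
      _ ≤ v ^ (m + 1) ⊔ v ^ (m + 1) * d := by gcongr
      _ ≤ v ^ (m + 1) ⊔ (v ^ m ⊔ d ^ (m + 1)) * d := by gcongr
      _ = v ^ (m + 1) ⊔ (v ^ m * d ⊔ d ^ (m + 2)) := by
          rw [← add_eq_sup (a := v ^ m), add_mul, ← pow_succ d, add_eq_sup (a := v ^ m * d)]
      _ ≤ v ^ (m + 1) ⊔ d ^ (m + 2) := by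
          have : v ^ m * d ≤ v ^ (m + 1) := by rw [pow_succ]; gcongr
          exact sup_le le_sup_left (sup_le (this.trans le_sup_left) le_sup_right)

/-- If `d ^ (j + 1) * v ^ i ≤ v ^ k`, then multiplying by `v` reduces to a smaller `j`; otherwise
`d ^ (j + 1) * v ^ i` fills the gap between `v ^ k` and `v ^ (k + 1)`, which forces
`d * v ^ (k + 1) ≤ v ^ (k + 1)`. -/
theorem not_pow_mul_pow_le_of_covBy (hd : d ≤ v) (hcov : v ^ k ⋖ v ^ (k + 1))
    (hdv : ¬d * v ^ (k + 1) ≤ v ^ (k + 1)) {i j : ℕ} (hij : i + j = k + 1) :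
    ¬d ^ (j + 1) * v ^ i ≤ v ^ (k + 1) := by
  induction j generalizing i with
  | zero => simpa [← hij] using hdv
  | succ j ih =>
    intro hle
    have hword : d ^ (j + 1) * v ^ i ≤ v ^ (k + 1) :=
      calc d ^ (j + 1) * v ^ i ≤ v ^ (j + 1) * v ^ i := by gcongr
        _ = v ^ (k + 1) := by rw [← pow_add]; congr 1; omega
    by_cases hk : d ^ (j + 1) * v ^ i ≤ v ^ k
    · refine ih (i := i + 1) (by omega) ?_
      calc d ^ (j + 1) * v ^ (i + 1) = d ^ (j + 1) * v ^ i * v := by rw [pow_succ v, mul_assoc]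
        _ ≤ v ^ k * v := by gcongr
        _ = v ^ (k + 1) := (pow_succ v k).symm
    · have hsup : v ^ k ⊔ d ^ (j + 1) * v ^ i = v ^ (k + 1) :=
        (hcov.eq_or_eq le_sup_left (sup_le hcov.le hword)).resolve_left (by simpa using hk)
      refine hdv ?_
      calc d * v ^ (k + 1) = d * v ^ k ⊔ d * (d ^ (j + 1) * v ^ i) := by
            rw [← hsup, ← add_eq_sup, mul_add, add_eq_sup]
        _ = d * v ^ k ⊔ d ^ (j + 2) * v ^ i := by rw [← mul_assoc, ← pow_succ']
        _ ≤ v * v ^ k ⊔ v ^ (k + 1) := by gcongr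
        _ = v ^ (k + 1) := by rw [← pow_succ', sup_idem]

theorem pow_succ_le_pow_sup_pow_of_covBy (hd : d ≤ v) (hcov : v ^ k ⋖ v ^ (k + 1))
    (hdv : ¬d * v ^ (k + 1) ≤ v ^ (k + 1)) (hkm : k ≤ m) :
    v ^ (m + 1) ≤ v ^ m ⊔ d ^ (m + 1) := by
  refine pow_succ_le_pow_sup_pow_of_le hd ?_ hkm
  have hdk : ¬d ^ (k + 1) ≤ v ^ k := fun hle ↦
    not_pow_mul_pow_le_of_covBy hd hcov hdv (zero_add (k + 1)) <|
      calc d ^ (k + 1 + 1) * v ^ 0 = d ^ (k + 1) * d := by rw [pow_zero, mul_one, pow_succ]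
        _ ≤ v ^ k * v := by gcongr
        _ = v ^ (k + 1) := (pow_succ v k).symm
  exact ((hcov.eq_or_eq le_sup_left (sup_le hcov.le (pow_le_pow_left' hd _))).resolve_left
    (by simpa using hdk)).ge

end PowerFiltration

section SpanPow

open scoped Pointwise

variable {F E : Type*} [Field F] [Ring E] [Algebra F E]

theorem two_add_finrank_le_of_lt_of_not_covBy [FiniteDimensional F E] {p q : Submodule F E}
    (hlt : p < q) (hcov : ¬p ⋖ q) : Module.finrank F p + 2 ≤ Module.finrank F q := by
  obtain ⟨t, hpt, htq⟩ := (not_covBy_iff hlt).mp hcov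
  have := Submodule.finrank_lt_finrank_of_lt hpt
  have := Submodule.finrank_lt_finrank_of_lt htq
  omega

variable {s : Set E} {N : ℕ}

theorem span_pow_succ_not_covBy (h1 : 1 ∈ s)
    (hpow : ∀ x ∈ s, x ^ (N + 1) ∈ Submodule.span F s ^ N)
    (hN : ¬Submodule.span F s ^ (N + 1) ≤ Submodule.span F s ^ N) {k : ℕ} (hk : k < N) :
    ¬Submodule.span F s ^ k ⋖ Submodule.span F s ^ (k + 1) := by
  intro hcov
  set V := Submodule.span F s
  have hV : 1 ≤ V := Submodule.one_le.mpr (Submodule.subset_span h1)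
  obtain ⟨x, hx, hxV⟩ : ∃ x ∈ s, ¬Submodule.span F {x} * V ^ (k + 1) ≤ V ^ (k + 1) := by
    by_contra! hle
    refine hN ((pow_le_of_pow_succ_le hV ?_ (N + 1)).trans (pow_le_pow_right' hV hk))
    calc V ^ (k + 1 + 1) = (⨆ x ∈ s, Submodule.span F {x}) * V ^ (k + 1) := by
          rw [← Submodule.span_eq_iSup_of_singleton_spans, pow_succ']
      _ ≤ V ^ (k + 1) := by simpa only [Submodule.iSup_mul, iSup_le_iff] using hle
  have hxN : Submodule.span F {x} ^ (N + 1) ≤ V ^ N := by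
    rw [Submodule.span_pow, Set.singleton_pow, Submodule.span_singleton_le_iff_mem]
    exact hpow x hx
  have hxV' : Submodule.span F {x} ≤ V := Submodule.span_mono (Set.singleton_subset_iff.mpr hx)
  exact hN ((pow_succ_le_pow_sup_pow_of_covBy hxV' hcov hxV hk.le).trans (sup_le le_rfl hxN))

theorem span_pow_le_span_pow_of_finrank_le [FiniteDimensional F E] (h1 : 1 ∈ s)
    (hpow : ∀ x ∈ s, x ^ (N + 1) ∈ Submodule.span F s ^ N)
    (hE : Module.finrank F E ≤ 2 * N) (m : ℕ) :
    Submodule.span F s ^ m ≤ Submodule.span F s ^ N := by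
  have hV : 1 ≤ Submodule.span F s := Submodule.one_le.mpr (Submodule.subset_span h1)
  refine pow_le_of_pow_succ_le hV ?_ m
  by_contra hN
  have hlt {k : ℕ} (hk : k ≤ N) : Submodule.span F s ^ k < Submodule.span F s ^ (k + 1) :=
    lt_of_le_not_ge (pow_le_pow_right' hV k.le_succ) fun hle ↦
      hN ((pow_le_of_pow_succ_le hV hle (N + 1)).trans (pow_le_pow_right' hV hk))
  have hrank {k : ℕ} (hk : k ≤ N) : 2 * k ≤ Module.finrank F ↥(Submodule.span F s ^ k) := by
    induction k with
    | zero => exact Nat.zero_le _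
    | succ k ih =>
      have := ih (by omega)
      have := two_add_finrank_le_of_lt_of_not_covBy (hlt (Nat.le_of_succ_le hk))
        (span_pow_succ_not_covBy h1 hpow hN hk)
      omega
  have := hrank le_rfl
  have := Submodule.finrank_lt_finrank_of_lt (hlt le_rfl)
  have := Submodule.finrank_le (Submodule.span F s ^ (N + 1))
  omega

theorem pow_succ_mem_pow_of_natDegree_minpoly_le {V : Submodule F E} (hV : 1 ≤ V) {x : E}
    (hxV : x ∈ V) (hx : IsIntegral F x) (hdeg : (minpoly F x).natDegree ≤ N + 1) :
    x ^ (N + 1) ∈ V ^ N := by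
  have hrem : ((Polynomial.X ^ (N + 1)) %ₘ minpoly F x).natDegree ≤ N := by
    rw [Polynomial.natDegree_le_iff_coeff_eq_zero]
    exact (Polynomial.degree_lt_iff_coeff_zero _ (N + 1)).mp <|
      (Polynomial.degree_modByMonic_lt _ (minpoly.monic hx)).trans_le
        (Polynomial.degree_le_of_natDegree_le hdeg)
  rw [← Polynomial.aeval_X_pow (R := F) x,
    ← Polynomial.aeval_modByMonic_eq_self_of_root (minpoly.aeval F x),
    Polynomial.aeval_eq_sum_range' (Nat.lt_succ_of_le hrem)]
  refine Submodule.sum_mem _ fun i hi ↦ Submodule.smul_mem _ _ ?_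
  exact pow_le_pow_right' hV (Finset.mem_range_succ_iff.mp hi) (Submodule.pow_mem_pow V hxV i)

theorem insert_one_range_pow {M ι : Type*} [Monoid M] (a : ι → M) (k : ℕ) :
    (insert 1 (Set.range a)) ^ k = {x | ∃ w : List ι, w.length ≤ k ∧ (w.map a).prod = x} := by
  induction k with
  | zero => ext x; simp [List.length_eq_zero_iff, eq_comm]
  | succ k ih =>
    ext x
    rw [pow_succ', ih, Set.mem_mul]
    constructor
    · rintro ⟨y, rfl | ⟨i, rfl⟩, _, ⟨w, hw, rfl⟩, rfl⟩
      · exact ⟨w, hw.trans k.le_succ, (one_mul _).symm⟩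
      · exact ⟨i :: w, by simpa using hw, by simp⟩
    · rintro ⟨_ | ⟨i, w⟩, hw, rfl⟩
      · exact ⟨1, .inl rfl, 1, ⟨[], by simp, rfl⟩, by simp⟩
      · exact ⟨a i, .inr ⟨i, rfl⟩, _, ⟨w, by simpa using hw, rfl⟩, by simp⟩

theorem prod_map_mem_span_of_natDegree_minpoly_le [FiniteDimensional F E] {ι : Type*} (a : ι → E)
    (hE : Module.finrank F E ≤ 2 * N) (ha : ∀ i, (minpoly F (a i)).natDegree ≤ N + 1)
    (w : List ι) :
    (w.map a).prod ∈ Submodule.span F {x | ∃ u : List ι, u.length ≤ N ∧ (u.map a).prod = x} := by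
  have hV : 1 ≤ Submodule.span F (insert 1 (Set.range a)) :=
    Submodule.one_le.mpr (Submodule.subset_span (Set.mem_insert _ _))
  have hstable := span_pow_le_span_pow_of_finrank_le (Set.mem_insert 1 (Set.range a)) ?_ hE w.length
  · rw [Submodule.span_pow, Submodule.span_pow, insert_one_range_pow,
      insert_one_range_pow] at hstable
    exact hstable (Submodule.subset_span ⟨w, le_rfl, rfl⟩)
  · rintro _ (rfl | ⟨i, rfl⟩)
    · rw [one_pow]
      exact Submodule.one_le.mp (one_le_pow_of_one_le' hV N)
    · exact pow_succ_mem_pow_of_natDegree_minpoly_le hV (Submodule.subset_span (.inr ⟨i, rfl⟩))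
        (Algebra.IsIntegral.isIntegral _) (ha i)

end SpanPow

section TraceWord

variable {F m : Type*} [Field F] [Fintype m] [DecidableEq m]

theorem natDegree_minpoly_prodMk_matrix_le (A B : Matrix m m F) :
    (minpoly F (A, B)).natDegree ≤ 2 * Fintype.card m := by
  have hroot : Polynomial.aeval (A, B) (A.charpoly * B.charpoly) = 0 := by
    rw [Polynomial.aeval_prod_apply, map_mul, map_mul, Matrix.aeval_self_charpoly,
      Matrix.aeval_self_charpoly, zero_mul, mul_zero, Prod.mk_zero_zero]
  have hmonic := A.charpoly_monic.mul B.charpoly_monic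
  calc (minpoly F (A, B)).natDegree ≤ (A.charpoly * B.charpoly).natDegree :=
        Polynomial.natDegree_le_of_dvd (minpoly.dvd F _ hroot) hmonic.ne_zero
    _ = 2 * Fintype.card m := by
        rw [A.charpoly_monic.natDegree_mul B.charpoly_monic, Matrix.charpoly_natDegree_eq_dim,
          Matrix.charpoly_natDegree_eq_dim, two_mul]

theorem trace_prod_map_eq_of_length_le {ι : Type*} {A B : ι → Matrix m m F}
    (h : ∀ w : List ι, w.length ≤ Fintype.card m ^ 2 →
      (w.map A).prod.trace = (w.map B).prod.trace) (w : List ι) :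
    (w.map A).prod.trace = (w.map B).prod.trace := by
  let traceSub : Matrix m m F × Matrix m m F →ₗ[F] F :=
    Matrix.traceLinearMap m F F ∘ₗ LinearMap.fst F _ _ -
      Matrix.traceLinearMap m F F ∘ₗ LinearMap.snd F _ _
  have traceSub_prod (w : List ι) :
      traceSub (w.map fun i ↦ (A i, B i)).prod = (w.map A).prod.trace - (w.map B).prod.trace := by
    have hfst := map_list_prod (MonoidHom.fst (Matrix m m F) (Matrix m m F))
      (w.map fun i ↦ (A i, B i))
    have hsnd := map_list_prod (MonoidHom.snd (Matrix m m F) (Matrix m m F))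
      (w.map fun i ↦ (A i, B i))
    rw [List.map_map] at hfst hsnd
    exact congrArg₂ (fun X Y ↦ X.trace - Y.trace) hfst hsnd
  have hspan := prod_map_mem_span_of_natDegree_minpoly_le (F := F) (N := Fintype.card m ^ 2)
    (fun i ↦ (A i, B i)) ?_ (fun i ↦ ?_) w
  · have hker : Submodule.span F {x | ∃ u : List ι, u.length ≤ Fintype.card m ^ 2 ∧
        (u.map fun i ↦ (A i, B i)).prod = x} ≤ LinearMap.ker traceSub := by
      rw [Submodule.span_le]
      rintro _ ⟨u, hu, rfl⟩
      exact (traceSub_prod u).trans (sub_eq_zero.mpr (h u hu))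
    exact sub_eq_zero.mp ((traceSub_prod w).symm.trans (hker hspan))
  · rw [Module.finrank_prod, Module.finrank_matrix, Module.finrank_self]
    linarith
  · exact (natDegree_minpoly_prodMk_matrix_le (A i) (B i)).trans
      (by nlinarith [two_mul_le_add_sq (Fintype.card m) 1])

end TraceWord

section Invariants

theorem semiconjBy_prod_map {M ι : Type*} [Monoid M] {u : M} {a b : ι → M}
    (h : ∀ i, SemiconjBy u (a i) (b i)) (w : List ι) :
    SemiconjBy u (w.map a).prod (w.map b).prod := by
  induction w with
  | nil => exact SemiconjBy.one_right u
  | cons i w ih => simpa using (h i).mul_right ih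

theorem trace_eq_of_semiconjBy {m S : Type*} [Fintype m] [DecidableEq m] [CommRing S]
    {X Y : Matrix m m S} (u : GL m S) (h : SemiconjBy (u : Matrix m m S) X Y) :
    X.trace = Y.trace := by
  rw [(Units.eq_mul_inv_iff_mul_eq u).mpr h.eq.symm, Matrix.trace_units_conj]

variable {F : Type*} [Field F] {n r : ℕ} {A B C : Fin r → Matrix (Fin n) (Fin n) F}

/-- Two tuples of matrices have the same invariants if no invariant of simultaneous conjugation
separates them. -/
def SameInvariants (A B : Fin r → Matrix (Fin n) (Fin n) F) : Prop :=
  ∀ f : MvPolynomial (Fin r × Fin n × Fin n) F,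
    IsSimConjInvariant F n r f → evalTuple A f = evalTuple B f

namespace SameInvariants

theorem refl (A : Fin r → Matrix (Fin n) (Fin n) F) : SameInvariants A A := fun _ _ ↦ rfl

theorem symm (h : SameInvariants A B) : SameInvariants B A := fun f hf ↦ (h f hf).symm

theorem trans (hAB : SameInvariants A B) (hBC : SameInvariants B C) : SameInvariants A C :=
  fun f hf ↦ (hAB f hf).trans (hBC f hf)

theorem of_semiconjBy (u : GL (Fin n) F)
    (h : ∀ i, SemiconjBy (u : Matrix (Fin n) (Fin n) F) (A i) (B i)) : SameInvariants A B := by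
  intro f hf
  have hB (i : Fin r) : B i = u * A i * (u⁻¹ : GL (Fin n) F) :=
    (Units.eq_mul_inv_iff_mul_eq u).mpr (h i).eq.symm
  have heval := congrArg (MvPolynomial.aeval fun v ↦ A v.1 v.2.1 v.2.2) (hf u)
  rw [MvPolynomial.comp_aeval_apply] at heval
  simpa [evalTuple, hB, Matrix.mul_apply, genMat, MvPolynomial.aeval_eq_eval] using heval.symm

end SameInvariants

theorem aeval_trace_prod_map_genMat {S : Type*} [CommRing S] [Algebra F S]
    (N : Fin r → Matrix (Fin n) (Fin n) S) (w : List (Fin r)) :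
    MvPolynomial.aeval (fun v ↦ N v.1 v.2.1 v.2.2) (w.map (genMat F n r)).prod.trace =
      (w.map N).prod.trace := by
  rw [AddMonoidHom.map_trace, ← AlgHom.mapMatrix_apply, map_list_prod, List.map_map]
  congr 3
  ext i a b
  simp [genMat]

theorem isSimConjInvariant_trace_prod_map_genMat (w : List (Fin r)) :
    IsSimConjInvariant F n r (w.map (genMat F n r)).prod.trace := by
  intro P
  rw [aeval_trace_prod_map_genMat fun i ↦ (P : Matrix (Fin n) (Fin n) F).map MvPolynomial.C *
    genMat F n r i * ((P⁻¹ : GL (Fin n) F) : Matrix (Fin n) (Fin n) F).map MvPolynomial.C]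
  let u := Units.map (MvPolynomial.C (σ := Fin r × Fin n × Fin n)).mapMatrix.toMonoidHom P
  refine (trace_eq_of_semiconjBy u (semiconjBy_prod_map (fun i ↦ ?_) w)).symm
  exact ((Units.eq_mul_inv_iff_mul_eq u).mp rfl).symm

theorem SameInvariants.trace_prod_map_eq (h : SameInvariants A B) (w : List (Fin r)) :
    (w.map A).prod.trace = (w.map B).prod.trace := by
  have hw := h _ (isSimConjInvariant_trace_prod_map_genMat w)
  rwa [evalTuple, evalTuple, ← MvPolynomial.aeval_eq_eval, ← MvPolynomial.aeval_eq_eval,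
    aeval_trace_prod_map_genMat, aeval_trace_prod_map_genMat] at hw

end Invariants

section Degeneration

theorem evalTuple_eq_of_forall_ne_zero {F : Type*} [Field F] [Infinite F] {n r : ℕ}
    (A D : Fin r → Matrix (Fin n) (Fin n) F) {f : MvPolynomial (Fin r × Fin n × Fin n) F} {c : F}
    (h : ∀ t : F, t ≠ 0 → evalTuple (A + t • D) f = c) : evalTuple A f = c := by
  let onLine : Polynomial F := MvPolynomial.aeval
    (fun v ↦ Polynomial.C (A v.1 v.2.1 v.2.2) + Polynomial.X * Polynomial.C (D v.1 v.2.1 v.2.2)) f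
  have eval_onLine (t : F) : onLine.eval t = evalTuple (A + t • D) f := by
    rw [← Polynomial.coe_aeval_eq_eval, MvPolynomial.comp_aeval_apply]
    simp [evalTuple, MvPolynomial.aeval_eq_eval, mul_comm t]
  have hconst : onLine = Polynomial.C c :=
    Polynomial.eq_of_infinite_eval_eq _ _ <|
      (Set.finite_singleton (0 : F)).infinite_compl.mono fun t ht ↦ by
        simpa [eval_onLine] using h t ht
  simpa [hconst] using (eval_onLine 0).symm

variable {F E : Type*} [Field F] [Ring E] [Algebra F E] {p : E}

/-- The diagonal part `pap + (1 - p)a(1 - p)` of `a` in its Peirce decomposition with respect to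
an idempotent `p`: if `p` projects onto an invariant subspace `W` of a matrix `a`, this is the
action of `a` on `W × V ⧸ W`. -/
def peirceDiagonal (p a : E) : E := p * a * p + (1 - p) * a * (1 - p)

theorem smul_add_one_sub_mul_of_isIdempotentElem (hp : IsIdempotentElem p) (s t : F) :
    (s • p + (1 - p)) * (t • p + (1 - p)) = (s * t) • p + (1 - p) := by
  simp [add_mul, mul_add, hp.eq, hp.one_sub.eq, hp.mul_one_sub_self,
    hp.one_sub_mul_self, smul_smul, mul_comm t]

theorem isUnit_smul_add_one_sub_of_isIdempotentElem (hp : IsIdempotentElem p) {t : F}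
    (ht : t ≠ 0) : IsUnit (t • p + (1 - p)) :=
  isUnit_iff_exists.mpr ⟨t⁻¹ • p + (1 - p),
    by simp [smul_add_one_sub_mul_of_isIdempotentElem hp, ht],
    by simp [smul_add_one_sub_mul_of_isIdempotentElem hp, ht]⟩

theorem mul_peirceDiagonal (hp : IsIdempotentElem p) (a : E) :
    p * peirceDiagonal p a = p * a * p := by
  rw [peirceDiagonal, mul_add, mul_assoc (1 - p), ← mul_assoc p (1 - p), hp.mul_one_sub_self,
    zero_mul, add_zero, ← mul_assoc, ← mul_assoc, hp.eq]

theorem peirceDiagonal_mul (hp : IsIdempotentElem p) (a : E) :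
    peirceDiagonal p a * p = p * a * p := by
  rw [peirceDiagonal, add_mul, mul_assoc _ (1 - p), hp.one_sub_mul_self, mul_zero, add_zero,
    mul_assoc, hp.eq]

theorem peirceDiagonal_mul_one_sub (hp : IsIdempotentElem p) (a : E) :
    peirceDiagonal p a * (1 - p) = (1 - p) * a * (1 - p) := by
  rw [mul_sub, mul_one, peirceDiagonal_mul hp, peirceDiagonal, add_sub_cancel_left]

theorem semiconjBy_peirceDiagonal_add_smul (hp : IsIdempotentElem p) {a : E}
    (ha : p * a * p = a * p) (t : F) :
    SemiconjBy (t • p + (1 - p)) a (peirceDiagonal p a + t • (p * a * (1 - p))) := by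
  have ha' : (1 - p) * a * (1 - p) = (1 - p) * a := by
    rw [mul_sub, mul_one, sub_eq_self, sub_mul, sub_mul, one_mul, ha, sub_self]
  calc (t • p + (1 - p)) * a = t • (p * a) + (1 - p) * a := by rw [add_mul, smul_mul_assoc]
    _ = t • (p * a * p + p * a * (1 - p)) + (1 - p) * a * (1 - p) := by
        rw [ha', ← mul_add, add_sub_cancel, mul_one]
    _ = (peirceDiagonal p a + t • (p * a * (1 - p))) * (t • p + (1 - p)) := by
        rw [mul_add, add_mul, add_mul, mul_smul_comm, peirceDiagonal_mul hp,
          peirceDiagonal_mul_one_sub hp, smul_mul_smul_comm, smul_mul_assoc,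
          mul_assoc _ (1 - p) p, mul_assoc _ (1 - p) (1 - p), hp.one_sub_mul_self,
          hp.one_sub.eq, mul_zero, smul_zero, add_zero, smul_add]
        abel

theorem sameInvariants_peirceDiagonal [Infinite F] {n r : ℕ} (A : Fin r → Matrix (Fin n) (Fin n) F)
    {p : Matrix (Fin n) (Fin n) F} (hp : IsIdempotentElem p) (hA : ∀ i, p * A i * p = A i * p) :
    SameInvariants A fun i ↦ peirceDiagonal p (A i) := by
  intro f hf
  refine (evalTuple_eq_of_forall_ne_zero _ (fun i ↦ p * A i * (1 - p)) fun t ht ↦ ?_).symm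
  obtain ⟨u, hu⟩ := isUnit_smul_add_one_sub_of_isIdempotentElem hp ht
  have hconj (i : Fin r) : SemiconjBy (u : Matrix (Fin n) (Fin n) F) (A i)
      (peirceDiagonal p (A i) + t • (p * A i * (1 - p))) :=
    hu ▸ semiconjBy_peirceDiagonal_add_smul hp (hA i) t
  exact (SameInvariants.of_semiconjBy u hconj f hf).symm

end Degeneration

section TracePolynomial

theorem prod_ofFn_sum_smul {S E κ : Type*} [CommSemiring S] [Semiring E] [Algebra S E] [Fintype κ]
    {ℓ : ℕ} (c : Fin ℓ → κ → S) (M : κ → E) :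
    (List.ofFn fun j ↦ ∑ i, c j i • M i).prod =
      ∑ w : Fin ℓ → κ, (∏ j, c j (w j)) • ((List.ofFn w).map M).prod := by
  have hsum : MultilinearMap.mkPiAlgebraFin S ℓ E (fun j ↦ ∑ i, c j i • M i) =
      ∑ w : Fin ℓ → κ, MultilinearMap.mkPiAlgebraFin S ℓ E fun j ↦ c j (w j) • M (w j) :=
    MultilinearMap.map_sum _ _
  simpa [MultilinearMap.map_smul_univ, List.map_ofFn, Function.comp_def] using hsum

variable {R : Type*} [CommRing R] {n r : ℕ}

theorem fpoly_eq_sum_monomial (ℓ : ℕ) (A : Fin r → Matrix (Fin n) (Fin n) R) :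
    fpoly n r ℓ A = ∑ w : Fin ℓ → Fin r,
      MvPolynomial.monomial (Finsupp.equivFunOnFinite.symm fun j ↦ (w j : ℕ))
        ((List.ofFn w).map A).prod.trace := by
  let M (i : Fin r) : Matrix (Fin n) (Fin n) (MvPolynomial (Fin ℓ) R) :=
    MvPolynomial.C.mapMatrix (A i)
  have hM (j : Fin ℓ) :
      (∑ i : Fin r, (A i).map fun a ↦ MvPolynomial.C a * MvPolynomial.X j ^ (i : ℕ)) =
        ∑ i : Fin r, (MvPolynomial.X j ^ (i : ℕ) : MvPolynomial (Fin ℓ) R) • M i := by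
    refine Finset.sum_congr rfl fun i _ ↦ ?_
    ext1 a b
    simp [M, mul_comm]
  have htrace (w : List (Fin r)) :
      (w.map M).prod.trace = MvPolynomial.C (w.map A).prod.trace := by
    rw [AddMonoidHom.map_trace, ← RingHom.mapMatrix_apply, map_list_prod, List.map_map]
    rfl
  rw [fpoly]
  simp only [hM]
  rw [prod_ofFn_sum_smul, Matrix.trace_sum]
  refine Finset.sum_congr rfl fun w _ ↦ ?_
  rw [Matrix.trace_smul, htrace, smul_eq_mul, mul_comm, MvPolynomial.monomial_eq,
    Finsupp.prod_fintype _ _ fun _ ↦ pow_zero _]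
  rfl

theorem coeff_fpoly (A : Fin r → Matrix (Fin n) (Fin n) R) (w : List (Fin r)) :
    (fpoly n r w.length A).coeff (Finsupp.equivFunOnFinite.symm fun j ↦ (w.get j : ℕ)) =
      (w.map A).prod.trace := by
  classical
  rw [fpoly_eq_sum_monomial, MvPolynomial.coeff_sum, Finset.sum_eq_single w.get]
  · rw [MvPolynomial.coeff_monomial, if_pos rfl, List.ofFn_get]
  · intro u _ hu
    rw [MvPolynomial.coeff_monomial, if_neg]
    exact fun heq ↦ hu <| funext fun j ↦
      Fin.ext (congrFun (Finsupp.equivFunOnFinite.symm.injective heq) j)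
  · exact fun h ↦ absurd (Finset.mem_univ _) h

theorem fpoly_eq_iff {ℓ : ℕ} {A B : Fin r → Matrix (Fin n) (Fin n) R} :
    fpoly n r ℓ A = fpoly n r ℓ B ↔
      ∀ w : List (Fin r), w.length = ℓ → (w.map A).prod.trace = (w.map B).prod.trace := by
  constructor
  · rintro h w rfl
    rw [← coeff_fpoly, ← coeff_fpoly, h]
  · intro h
    rw [fpoly_eq_sum_monomial, fpoly_eq_sum_monomial]
    exact Finset.sum_congr rfl fun w _ ↦ by rw [h _ List.length_ofFn]

end TracePolynomial

section TupleModule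

variable {F m ι : Type*} [Field F]

/-- The space `m → F` of column vectors as a module over the free algebra on `ι`, whose generators
act through the matrices of the tuple `A`. -/
def TupleModule (_A : ι → Matrix m m F) : Type _ := m → F

namespace TupleModule

variable (A : ι → Matrix m m F) {B : ι → Matrix m m F} {p : Matrix m m F}

noncomputable instance : AddCommGroup (TupleModule A) := inferInstanceAs (AddCommGroup (m → F))

noncomputable instance : Module F (TupleModule A) := inferInstanceAs (Module F (m → F))

instance [Finite m] : FiniteDimensional F (TupleModule A) :=
  inferInstanceAs (FiniteDimensional F (m → F))

variable [Fintype m]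

theorem finrank_eq : Module.finrank F (TupleModule A) = Fintype.card m :=
  Module.finrank_fintype_fun_eq_card F

variable [DecidableEq m]

noncomputable instance : Module (FreeAlgebra F ι) (TupleModule A) :=
  Module.compHom (m → F)
    ((Matrix.toLinAlgEquiv' (R := F)).toAlgHom.comp (FreeAlgebra.lift F A)).toRingHom

variable {A}

theorem smul_def (x : FreeAlgebra F ι) (v : TupleModule A) :
    x • v = (FreeAlgebra.lift F A x).mulVec v := rfl

theorem ι_smul (i : ι) (v : TupleModule A) : FreeAlgebra.ι F i • v = (A i).mulVec v := by
  rw [smul_def, FreeAlgebra.lift_ι_apply]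

instance : IsScalarTower F (FreeAlgebra F ι) (TupleModule A) where
  smul_assoc c x v :=
    (congrArg (Matrix.mulVec · v) (map_smul (FreeAlgebra.lift F A) c x)).trans
      (Matrix.smul_mulVec c (FreeAlgebra.lift F A x) v)

theorem actionTrace_eq (x : FreeAlgebra F ι) :
    actionTrace F (TupleModule A) x = (FreeAlgebra.lift F A x).trace :=
  Matrix.trace_toLin'_eq (FreeAlgebra.lift F A x)

theorem actionTrace_eq_of_trace_prod_map_eq
    (h : ∀ w : List ι, (w.map A).prod.trace = (w.map B).prod.trace) (x : FreeAlgebra F ι) :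
    actionTrace F (TupleModule A) x = actionTrace F (TupleModule B) x := by
  have hlin : Matrix.traceLinearMap m F F ∘ₗ (FreeAlgebra.lift F A).toLinearMap =
      Matrix.traceLinearMap m F F ∘ₗ (FreeAlgebra.lift F B).toLinearMap := by
    refine (FreeAlgebra.basisFreeMonoid F ι).ext fun w ↦ ?_
    simpa [FreeAlgebra.basisFreeMonoid, FreeAlgebra.equivMonoidAlgebraFreeMonoid,
      FreeMonoid.lift_apply, map_list_prod, Function.comp_def] using h w.toList
  rw [actionTrace_eq, actionTrace_eq]
  exact LinearMap.congr_fun hlin x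

/-- The homomorphism `v ↦ p v` of modules over the free algebra given by a matrix `p` that
intertwines two tuples. -/
noncomputable def homOfSemiconjBy (h : ∀ i, SemiconjBy p (A i) (B i)) :
    TupleModule A →ₗ[FreeAlgebra F ι] TupleModule B where
  toFun v := p.mulVec v
  map_add' := p.mulVec_add
  map_smul' x v := by
    have hx : SemiconjBy p (FreeAlgebra.lift F A x) (FreeAlgebra.lift F B x) := by
      induction x using FreeAlgebra.induction with
      | grade0 c => exact (FreeAlgebra.lift F A).commutes c ▸ (FreeAlgebra.lift F B).commutes c ▸
          (Algebra.commutes c p).symm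
      | grade1 i => simpa using h i
      | mul x y hx hy => simpa using hx.mul_right hy
      | add x y hx hy => simpa using hx.add_right hy
    calc p.mulVec ((FreeAlgebra.lift F A x).mulVec v)
      _ = (p * FreeAlgebra.lift F A x).mulVec v := Matrix.mulVec_mulVec v p _
      _ = (FreeAlgebra.lift F B x * p).mulVec v := by rw [hx.eq]
      _ = (FreeAlgebra.lift F B x).mulVec (p.mulVec v) := (Matrix.mulVec_mulVec v _ p).symm

theorem homOfSemiconjBy_apply (h : ∀ i, SemiconjBy p (A i) (B i)) (v : TupleModule A) :
    homOfSemiconjBy h v = p.mulVec v := rfl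

theorem ker_homOfSemiconjBy {C : ι → Matrix m m F} (h : ∀ i, SemiconjBy p (A i) (B i))
    (h' : ∀ i, SemiconjBy p (A i) (C i)) :
    LinearMap.ker (homOfSemiconjBy h) = LinearMap.ker (homOfSemiconjBy h') :=
  Submodule.ext fun v ↦ by
    rw [LinearMap.mem_ker, LinearMap.mem_ker, homOfSemiconjBy_apply, homOfSemiconjBy_apply]
    rfl

theorem exists_semiconjBy_of_linearEquiv
    (e : TupleModule A ≃ₗ[FreeAlgebra F ι] TupleModule B) :
    ∃ u : GL m F, ∀ i, SemiconjBy (u : Matrix m m F) (A i) (B i) := by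
  let e' : (m → F) ≃ₗ[F] (m → F) := e.restrictScalars F
  refine ⟨Matrix.GeneralLinearGroup.toLin.symm (.ofLinearEquiv e'), fun i ↦ ?_⟩
  have hp (v : m → F) : (LinearMap.toMatrix' e'.toLinearMap).mulVec v = e' v := by
    rw [← Matrix.toLin'_apply, Matrix.toLin'_toMatrix', LinearEquiv.coe_coe]
  refine Matrix.mulVec_injective (funext fun v ↦ ?_)
  calc (LinearMap.toMatrix' e'.toLinearMap * A i).mulVec v
    _ = e' ((A i).mulVec v) := by rw [← Matrix.mulVec_mulVec, hp]
    _ = (B i).mulVec (e' v) :=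
      (congrArg e (ι_smul (A := A) i v).symm).trans <|
        (e.map_smul (FreeAlgebra.ι F i) v).trans (ι_smul i (e v))
    _ = (B i * LinearMap.toMatrix' e'.toLinearMap).mulVec v := by
      rw [← Matrix.mulVec_mulVec, hp]

theorem exists_isIdempotentElem_matrix (S : Submodule (FreeAlgebra F ι) (TupleModule A)) :
    ∃ p : Matrix m m F, IsIdempotentElem p ∧ (∀ i, p * A i * p = A i * p) ∧
      ∀ v : TupleModule A, v ∈ S ↔ ∃ w, p.mulVec w = v := by
  let W : Submodule F (m → F) := S.restrictScalars F
  obtain ⟨C, hC⟩ := exists_isCompl W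
  let p := LinearMap.toMatrix' (W.projection C hC)
  have hp_apply (v : m → F) : p.mulVec v = W.projection C hC v := by
    rw [← Matrix.toLin'_apply, Matrix.toLin'_toMatrix']
  have hp_mem (v : m → F) : p.mulVec v ∈ W := by
    rw [hp_apply]
    exact Submodule.projection_apply_mem hC v
  have hp_eq {v : m → F} (hv : v ∈ W) : p.mulVec v = v := by
    rw [hp_apply]
    exact Submodule.projection_apply_of_mem_left hC hv
  refine ⟨p, ?_, fun i ↦ ?_, fun v ↦ ⟨fun hv ↦ ⟨v, hp_eq hv⟩, ?_⟩⟩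
  · refine Matrix.mulVec_injective (funext fun v ↦ ?_)
    rw [← Matrix.mulVec_mulVec, hp_eq (hp_mem v)]
  · refine Matrix.mulVec_injective (funext fun v ↦ ?_)
    rw [mul_assoc, ← Matrix.mulVec_mulVec, ← Matrix.mulVec_mulVec]
    refine hp_eq ?_
    exact ι_smul (A := A) i (p.mulVec v) ▸ S.smul_mem (FreeAlgebra.ι F i) (hp_mem v)
  · rintro ⟨w, rfl⟩
    exact hp_mem w

end TupleModule

end TupleModule

section Semisimplification

theorem exists_isSemisimpleModule_lt_of_disjoint {R M : Type*} [Ring R] [AddCommGroup M]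
    [Module R M] [IsArtinian R M] {S C : Submodule R M} [IsSemisimpleModule R S]
    (hdisj : Disjoint S C) (hC : C ≠ ⊥) : ∃ T, S < T ∧ IsSemisimpleModule R T := by
  obtain ⟨t, ht, htC⟩ := (IsAtomic.eq_bot_or_exists_atom_le C).resolve_left hC
  have : IsSimpleModule R t := isSimpleModule_iff_isAtom.mpr ht
  refine ⟨S ⊔ t, left_lt_sup.mpr fun htS ↦ ht.1 ?_, .sup inferInstance inferInstance⟩
  exact disjoint_self.mp (hdisj.mono htS htC)

variable {F : Type*} [Field F] [Infinite F] {n r : ℕ} {A B : Fin r → Matrix (Fin n) (Fin n) F}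

/-- Degenerating `A` along `S` makes `S` a direct summand, and a simple submodule of the
complement can then be added to it. -/
theorem exists_sameInvariants_finrank_lt (S : Submodule (FreeAlgebra F (Fin r)) (TupleModule A))
    [IsSemisimpleModule (FreeAlgebra F (Fin r)) S] (hS : S ≠ ⊤) :
    ∃ (B : Fin r → Matrix (Fin n) (Fin n) F)
      (T : Submodule (FreeAlgebra F (Fin r)) (TupleModule B)), SameInvariants A B ∧
      IsSemisimpleModule (FreeAlgebra F (Fin r)) T ∧ Module.finrank F S < Module.finrank F T := by
  obtain ⟨p, hp, hpA, hpS⟩ := TupleModule.exists_isIdempotentElem_matrix S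
  let B (i : Fin r) := peirceDiagonal p (A i)
  let φ : TupleModule B →ₗ[FreeAlgebra F (Fin r)] TupleModule A :=
    TupleModule.homOfSemiconjBy (p := p) fun i ↦ (mul_peirceDiagonal hp (A i)).trans (hpA i)
  let π : TupleModule B →ₗ[FreeAlgebra F (Fin r)] TupleModule B :=
    TupleModule.homOfSemiconjBy (p := p) fun i ↦
      (mul_peirceDiagonal hp (A i)).trans (peirceDiagonal_mul hp (A i)).symm
  have hφ : LinearMap.range φ = S := Submodule.ext fun v ↦ (hpS v).symm
  have hπ : IsIdempotentElem π := LinearMap.ext fun v ↦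
    (Matrix.mulVec_mulVec v p p).trans (congrArg (Matrix.mulVec · v) hp.eq)
  have hcompl : IsCompl (LinearMap.range π) (LinearMap.ker π) :=
    LinearMap.IsIdempotentElem.isCompl hπ
  have e : LinearMap.range π ≃ₗ[FreeAlgebra F (Fin r)] S :=
    π.quotKerEquivRange.symm ≪≫ₗ Submodule.quotEquivOfEq _ _ (TupleModule.ker_homOfSemiconjBy _ _)
      ≪≫ₗ φ.quotKerEquivRange ≪≫ₗ LinearEquiv.ofEq _ _ hφ
  have : IsSemisimpleModule (FreeAlgebra F (Fin r)) (LinearMap.range π) := .congr e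
  have : IsArtinian (FreeAlgebra F (Fin r)) (TupleModule B) := isArtinian_of_tower F inferInstance
  have hker : LinearMap.ker π ≠ ⊥ := fun hbot ↦ by
    have hsurj : LinearMap.range π = ⊤ := by simpa [hbot] using hcompl.sup_eq_top
    exact hS <| eq_top_iff.mpr fun v _ ↦ (hpS v).mpr (LinearMap.range_eq_top.mp hsurj v)
  obtain ⟨T, hlt, hT⟩ := exists_isSemisimpleModule_lt_of_disjoint hcompl.disjoint hker
  refine ⟨B, T, sameInvariants_peirceDiagonal A hp hpA, hT, ?_⟩
  rw [← (e.restrictScalars F).finrank_eq]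
  exact Submodule.finrank_lt_finrank_of_lt
    (s := (LinearMap.range π).restrictScalars F) (t := T.restrictScalars F) hlt

theorem exists_sameInvariants_isSemisimpleModule_of_submodule
    (A : Fin r → Matrix (Fin n) (Fin n) F) (S : Submodule (FreeAlgebra F (Fin r)) (TupleModule A))
    [IsSemisimpleModule (FreeAlgebra F (Fin r)) S] :
    ∃ B : Fin r → Matrix (Fin n) (Fin n) F, SameInvariants A B ∧
      IsSemisimpleModule (FreeAlgebra F (Fin r)) (TupleModule B) := by
  induction hd : n - Module.finrank F S using Nat.strong_induction_on generalizing A with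
  | _ d ih =>
    by_cases hS : S = ⊤
    · subst hS
      exact ⟨A, .refl A, .congr Submodule.topEquiv.symm⟩
    · obtain ⟨B, T, hAB, _, hlt⟩ := exists_sameInvariants_finrank_lt S hS
      have hT : Module.finrank F T ≤ n := by
        simpa [TupleModule.finrank_eq] using finrank_submodule_le_of_isScalarTower (F := F) T
      obtain ⟨D, hBD, hD⟩ := ih (n - Module.finrank F T) (by omega) B T rfl
      exact ⟨D, hAB.trans hBD, hD⟩

theorem exists_sameInvariants_isSemisimpleModule (A : Fin r → Matrix (Fin n) (Fin n) F) :
    ∃ B : Fin r → Matrix (Fin n) (Fin n) F, SameInvariants A B ∧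
      IsSemisimpleModule (FreeAlgebra F (Fin r)) (TupleModule B) :=
  have : IsSemisimpleModule (FreeAlgebra F (Fin r))
      (⊥ : Submodule (FreeAlgebra F (Fin r)) (TupleModule A)) :=
    .of_sSup_simples_eq_top (Subsingleton.elim _ _)
  exists_sameInvariants_isSemisimpleModule_of_submodule A ⊥

theorem sameInvariants_of_trace_prod_map_eq (hn : (n.factorial : F) ≠ 0)
    (h : ∀ w : List (Fin r), (w.map A).prod.trace = (w.map B).prod.trace) :
    SameInvariants A B := by
  obtain ⟨A', hA, _⟩ := exists_sameInvariants_isSemisimpleModule A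
  obtain ⟨B', hB, _⟩ := exists_sameInvariants_isSemisimpleModule B
  have hchar := TupleModule.actionTrace_eq_of_trace_prod_map_eq (A := A') (B := B') fun w ↦ by
    rw [← hA.trace_prod_map_eq, ← hB.trace_prod_map_eq, h]
  obtain ⟨e⟩ := nonempty_linearEquiv_of_actionTrace_eq (by simpa [TupleModule.finrank_eq])
    (by simpa [TupleModule.finrank_eq]) hchar
  obtain ⟨u, hu⟩ := TupleModule.exists_semiconjBy_of_linearEquiv e
  exact (hA.trans (.of_semiconjBy u hu)).trans hB.symm

end Semisimplification

theorem invariants_agree_iff_fpoly_eq_general {F : Type*} [Field F] [Infinite F] (n r : ℕ)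
    (hn : (n.factorial : F) ≠ 0) (A B : Fin r → Matrix (Fin n) (Fin n) F) :
    (∀ f : MvPolynomial (Fin r × Fin n × Fin n) F,
        IsSimConjInvariant F n r f → evalTuple A f = evalTuple B f) ↔
      (∀ ℓ : ℕ, 1 ≤ ℓ → ℓ ≤ n ^ 2 → fpoly n r ℓ A = fpoly n r ℓ B) := by
  constructor
  · intro h ℓ _ _
    exact fpoly_eq_iff.mpr fun w _ ↦ SameInvariants.trace_prod_map_eq h w
  · intro h
    refine sameInvariants_of_trace_prod_map_eq hn (trace_prod_map_eq_of_length_le fun w hw ↦ ?_)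
    rw [Fintype.card_fin] at hw
    rcases w.length.eq_zero_or_pos with hnil | hpos
    · rw [List.length_eq_zero_iff.mp hnil, List.map_nil, List.map_nil]
    · exact fpoly_eq_iff.mp (h w.length hpos hw) w rfl

/-- Over a field of characteristic zero, `f(A) = f(B)` for every
invariant `f ∈ F[M]^{GL_n(F)}` iff `f_ℓ(A,x) = f_ℓ(B,x)` for every `ℓ ∈ {1,…,n²}`. -/
theorem invariants_agree_iff_fpoly_eq {F : Type*} [Field F] [CharZero F] (n r : ℕ)
    (A B : Fin r → Matrix (Fin n) (Fin n) F) :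
    (∀ f : MvPolynomial (Fin r × Fin n × Fin n) F,
        IsSimConjInvariant F n r f → evalTuple A f = evalTuple B f) ↔
      (∀ ℓ : ℕ, 1 ≤ ℓ → ℓ ≤ n ^ 2 → fpoly n r ℓ A = fpoly n r ℓ B) :=
  have : Infinite F := .of_injective _ (Nat.cast_injective (R := F))
  invariants_agree_iff_fpoly_eq_general n r (Nat.cast_ne_zero.mpr n.factorial_ne_zero) A B
end

section
/- Chain rule for Hasse derivatives: let R be a commutative ring, f ∈ R[x_1,…,x_n], g_1,…,g_n ∈ R[y_1,…,y_p], u ∈ R^p, and k ≥ 1. Then ∂_{u^k}(f(g_1,…,g_n)) = Σ [ ∏_{j=1}^{k} ∏_{i=1}^{n} (∂_{u^j}(g_i))^{ℓ_{j,i}} ] · [ ∏_{i=1}^{n} (ℓ_{1,i}+⋯+ℓ_{k,i})! / (ℓ_{1,i}! ⋯ ℓ_{k,i}!) ] · (∂_{x^{ℓ_1+⋯+ℓ_k}} f)(g_1,…,g_n), where the sum ranges over all tuples (ℓ_1,…,ℓ_k) ∈ (ℕ^n)^k satisfying Σ_{j=1}^{k} j·|ℓ_j| = k (with |ℓ_j|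 the sum of the coordinates of ℓ_j), ℓ_1+⋯+ℓ_k is coordinatewise addition of multi-indices, and the multinomial coefficients are interpreted in R via the canonical ring map ℤ → R. -/
/-- The `k`-th Hasse derivative of `f` in direction `u`: the coefficient of `y^k` in
`f(x_1 + u_1 y, …, x_m + u_m y)`. -/
noncomputable def hasseDeriv {R : Type*} [CommRing R] {m : ℕ} (u : Fin m → R) (k : ℕ)
    (f : MvPolynomial (Fin m) R) : MvPolynomial (Fin m) R :=
  ((MvPolynomial.aeval fun i : Fin m =>
      Polynomial.C (MvPolynomial.X i) + Polynomial.C (MvPolynomial.C (u i)) * Polynomial.X)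
    f).coeff k

/-- `∂_{x_j^k}`, the `k`-th Hasse derivative with respect to the variable `x_j`
(direction the standard basis vector `e_j`). -/
noncomputable def hasseDerivAt {R : Type*} [CommRing R] {m : ℕ} (j : Fin m) (k : ℕ) :
    MvPolynomial (Fin m) R → MvPolynomial (Fin m) R :=
  hasseDeriv (Pi.single j (1 : R)) k

/-- `∂_{x^i} := ∂_{x_1^{i_1}} ∘ ⋯ ∘ ∂_{x_m^{i_m}}` for a multi-index `i`. -/
noncomputable def multiHasseDeriv {R : Type*} [CommRing R] {m : ℕ} (i : Fin m → ℕ)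
    (f : MvPolynomial (Fin m) R) : MvPolynomial (Fin m) R :=
  List.foldr (fun j g => hasseDerivAt j (i j) g) f (List.finRange m)

/-!
Along the line in direction `u`, the polynomial `f(g_1, …, g_n)` becomes `f` evaluated at the
expansions `g_i + ∑_{j ≥ 1} ∂_{u^j}(g_i) y^j`. For the coefficient of `y^k` these matter only modulo
`y^{k+1}`, so they may be cut off at `j = k`. The multi-index Hasse derivatives of `f` are the
coefficients of its Taylor expansion `f(x + h) = ∑_e h^e ∂_{x^e} f(x)`; with `h_i` a sum of `k`
terms, the multinomial theorem turns `h^e` into a sum over the tuples `(ℓ_1, …, ℓ_k)` with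
`ℓ_1 + ⋯ + ℓ_k = e`, whose terms are monomials in `y` of degree `∑_j j |ℓ_j|`.
-/

section MultiIndex

theorem finsum_fiberwise {α β M : Type*} [AddCommMonoid M] (φ : α → β) {f : α → M}
    (hf : f.HasFiniteSupport) : ∑ᶠ a, f a = ∑ᶠ (b) (a) (_ : φ a = b), f a := by
  classical
  have fiber (b : β) : ∑ᶠ (a) (_ : φ a = b), f a = ∑ a ∈ hf.toFinset with φ a = b, f a := by
    refine finsum_mem_eq_sum_of_inter_support_eq (s := {a | φ a = b}) f ?_
    ext a
    simp only [Set.mem_inter_iff, Set.mem_ofPred_eq, Function.mem_support, Finset.mem_coe,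
      Finset.mem_filter, Set.Finite.mem_toFinset hf]
    tauto
  rw [finsum_eq_sum f hf, finsum_congr fiber,
    finsum_eq_sum_of_support_subset (s := hf.toFinset.image φ),
    Finset.sum_fiberwise_of_maps_to fun a ha ↦ Finset.mem_image_of_mem φ ha]
  intro b hb
  obtain ⟨a, ha, -⟩ := Finset.exists_ne_zero_of_sum_ne_zero hb
  rw [Finset.mem_filter] at ha
  exact Finset.mem_coe.2 (Finset.mem_image.2 ⟨a, ha⟩)

variable {ι σ : Type*} [Fintype ι]

theorem finite_setOfPred_sum_mem [Finite σ] {S : Set (σ → ℕ)} (hS : S.Finite) :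
    {ℓ : ι → σ → ℕ | (fun i ↦ ∑ j, ℓ j i) ∈ S}.Finite := by
  classical
  have := Fintype.ofFinite σ
  refine hS.preimage' fun m _ ↦ (Set.finite_Iic fun _ : ι ↦ m).subset ?_
  rintro ℓ rfl j i
  exact Finset.single_le_sum_of_canonicallyOrdered (f := fun j ↦ ℓ j i) (Finset.mem_univ j)

theorem prod_sum_pow_eq_finsum_multinomial [Fintype σ] {A : Type*} [CommSemiring A]
    (s : ι → σ → A) (m : σ → ℕ) :
    ∏ i, (∑ j, s j i) ^ m i =
      ∑ᶠ (ℓ : ι → σ → ℕ) (_ : (fun i ↦ ∑ j, ℓ j i) = m),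
        (∏ j, ∏ i, s j i ^ ℓ j i) * ∏ i, (Nat.multinomial Finset.univ fun j ↦ ℓ j i : A) := by
  classical
  simp only [Finset.sum_pow_eq_sum_piAntidiag, Finset.prod_univ_sum]
  rw [← finsum_comp_equiv (Equiv.piComm fun (_ : σ) (_ : ι) ↦ ℕ), ← finsum_mem_coe_finset]
  refine finsum_congr fun ℓ ↦ finsum_congr_Prop ?_ fun _ ↦ ?_
  · simp [funext_iff]
  · rw [Finset.prod_mul_distrib, mul_comm, Finset.prod_comm]
    rfl

end MultiIndex

section Polynomials

theorem X_pow_succ_dvd_sub_sum_fin {A : Type*} [Ring A] (P : Polynomial A) (k : ℕ) :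
    Polynomial.X ^ (k + 1) ∣
      P - (Polynomial.C (P.coeff 0) +
        ∑ j : Fin k, Polynomial.C (P.coeff (j + 1)) * Polynomial.X ^ ((j : ℕ) + 1)) := by
  have truncation : Polynomial.C (P.coeff 0) +
      ∑ j : Fin k, Polynomial.C (P.coeff (j + 1)) * Polynomial.X ^ ((j : ℕ) + 1) =
        ∑ j ∈ Finset.range (k + 1), Polynomial.C (P.coeff j) * Polynomial.X ^ j := by
    rw [Finset.sum_range, Fin.sum_univ_succ]
    simp
  rw [truncation, Polynomial.X_pow_dvd_iff]
  intro d hd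
  simp [Nat.lt_succ_iff.1 hd]

theorem dvd_aeval_sub_aeval {R A σ : Type*} [CommSemiring R] [CommRing A] [Algebra R A] {a : A}
    {P Q : σ → A} (h : ∀ i, a ∣ P i - Q i) (f : MvPolynomial σ R) :
    a ∣ MvPolynomial.aeval P f - MvPolynomial.aeval Q f := by
  simp only [← Ideal.mem_span_singleton, ← Ideal.Quotient.eq] at h ⊢
  rw [← Ideal.Quotient.mkₐ_eq_mk R, MvPolynomial.comp_aeval_apply, MvPolynomial.comp_aeval_apply]
  exact congrArg (fun S ↦ MvPolynomial.aeval S f) (funext h)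

theorem prod_C_mul_X_pow_pow {ι σ A : Type*} [Fintype ι] [Fintype σ] [CommSemiring A]
    (b : ι → σ → A) (w : ι → ℕ) (ℓ : ι → σ → ℕ) :
    ∏ j, ∏ i, (Polynomial.C (b j i) * Polynomial.X ^ w j) ^ ℓ j i =
      Polynomial.C (∏ j, ∏ i, b j i ^ ℓ j i) * Polynomial.X ^ ∑ j, w j * ∑ i, ℓ j i := by
  simp only [mul_pow, Finset.prod_mul_distrib, ← pow_mul, Finset.prod_pow_eq_pow_sum,
    ← Finset.mul_sum, map_prod, map_pow]

end Polynomials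

section LineTaylor

variable {R : Type*} [CommRing R] {m : ℕ}

/-- The Taylor expansion `f(x_1 + u_1 y, …, x_m + u_m y)` along the line in direction `u`, as an
algebra homomorphism in `f` with values in polynomials in `y`. -/
noncomputable def lineTaylor (u : Fin m → R) :
    MvPolynomial (Fin m) R →ₐ[R] Polynomial (MvPolynomial (Fin m) R) :=
  MvPolynomial.aeval fun i ↦
    Polynomial.C (MvPolynomial.X i) + Polynomial.C (MvPolynomial.C (u i)) * Polynomial.X

theorem coeff_lineTaylor (u : Fin m → R) (k : ℕ) (f : MvPolynomial (Fin m) R) :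
    (lineTaylor u f).coeff k = hasseDeriv u k f := rfl

theorem hasseDeriv_add (u : Fin m → R) (k : ℕ) (f g : MvPolynomial (Fin m) R) :
    hasseDeriv u k (f + g) = hasseDeriv u k f + hasseDeriv u k g := by
  simp only [← coeff_lineTaylor, map_add, Polynomial.coeff_add]

theorem hasseDeriv_zero (u : Fin m → R) (f : MvPolynomial (Fin m) R) : hasseDeriv u 0 f = f := by
  have eval_zero :
      ((Polynomial.aeval (0 : MvPolynomial (Fin m) R)).restrictScalars R).comp (lineTaylor u) =
        AlgHom.id R _ := by
    ext i
    simp [lineTaylor]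
  rw [← coeff_lineTaylor, Polynomial.coeff_zero_eq_aeval_zero]
  exact DFunLike.congr_fun eval_zero f

theorem X_pow_succ_dvd_lineTaylor_sub (u : Fin m → R) (k : ℕ) (f : MvPolynomial (Fin m) R) :
    Polynomial.X ^ (k + 1) ∣
      lineTaylor u f - (Polynomial.C f +
        ∑ j : Fin k, Polynomial.C (hasseDeriv u (j + 1) f) * Polynomial.X ^ ((j : ℕ) + 1)) := by
  simpa only [coeff_lineTaylor, hasseDeriv_zero] using X_pow_succ_dvd_sub_sum_fin (lineTaylor u f) k

theorem hasseDeriv_aeval_eq_coeff_aeval {n : ℕ} (u : Fin m → R) (k : ℕ)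
    (g : Fin n → MvPolynomial (Fin m) R) (f : MvPolynomial (Fin n) R) :
    hasseDeriv u k (MvPolynomial.aeval g f) =
      (MvPolynomial.aeval (fun i ↦ Polynomial.C (g i) + ∑ j : Fin k,
        Polynomial.C (hasseDeriv u (j + 1) (g i)) * Polynomial.X ^ ((j : ℕ) + 1)) f).coeff k := by
  rw [← coeff_lineTaylor, MvPolynomial.comp_aeval_apply, ← sub_eq_zero, ← Polynomial.coeff_sub]
  exact Polynomial.X_pow_dvd_iff.1
    (dvd_aeval_sub_aeval (fun i ↦ X_pow_succ_dvd_lineTaylor_sub u k (g i)) f) k k.lt_succ_self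

theorem lineTaylor_single_monomial (j : Fin m) (a : Fin m →₀ ℕ) (c : R) :
    lineTaylor (Pi.single j 1) (MvPolynomial.monomial a c) =
      Polynomial.C (MvPolynomial.monomial (a.erase j) c) *
        (Polynomial.X + Polynomial.C (MvPolynomial.X j)) ^ a j := by
  have lineTaylor_erase : lineTaylor (Pi.single j 1) (MvPolynomial.monomial (a.erase j) c) =
      Polynomial.C (MvPolynomial.monomial (a.erase j) c) := by
    rw [lineTaylor, MvPolynomial.aeval_monomial, MvPolynomial.monomial_eq, map_mul, Finsupp.prod,
      Finsupp.prod, map_prod]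
    congr 1
    refine Finset.prod_congr rfl fun i hi ↦ ?_
    have hij : i ≠ j := Finset.ne_of_mem_erase (Finsupp.support_erase (f := a) ▸ hi)
    simp [hij]
  rw [← Finsupp.erase_add_single j a, ← mul_one c, ← MvPolynomial.monomial_mul, map_mul,
    ← MvPolynomial.X_pow_eq_monomial, map_pow,
    mul_one, Finsupp.erase_add_single, lineTaylor_erase]
  simp [lineTaylor, add_comm]

theorem hasseDerivAt_monomial (j : Fin m) (k : ℕ) (a : Fin m →₀ ℕ) (c : R) :
    hasseDerivAt j k (MvPolynomial.monomial a c) =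
      MvPolynomial.monomial (a - Finsupp.single j k) (c * ((a j).choose k : R)) := by
  have exponent : a.erase j + Finsupp.single j (a j - k) = a - Finsupp.single j k := by
    ext i
    obtain rfl | hij := eq_or_ne i j
    · simp
    · simp [hij]
  rw [hasseDerivAt, ← coeff_lineTaylor, lineTaylor_single_monomial, Polynomial.coeff_C_mul,
    Polynomial.coeff_X_add_C_pow, ← exponent, ← map_natCast MvPolynomial.C,
    MvPolynomial.X_pow_eq_monomial, MvPolynomial.C_apply, MvPolynomial.monomial_mul,
    MvPolynomial.monomial_mul, add_zero, one_mul]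

end LineTaylor

section MultiTaylor

variable {R : Type*} [CommRing R] {m : ℕ}

theorem foldr_hasseDerivAt_monomial (i : Fin m → ℕ) (a : Fin m →₀ ℕ) (c : R)
    {L : List (Fin m)} (hL : L.Nodup) :
    L.foldr (fun j g ↦ hasseDerivAt j (i j) g) (MvPolynomial.monomial a c) =
      MvPolynomial.monomial (a - (L.map fun j ↦ Finsupp.single j (i j)).sum)
        (c * (L.map fun j ↦ ((a j).choose (i j) : R)).prod) := by
  induction L with
  | nil => simp
  | cons j L ih =>
    obtain ⟨hj, hL⟩ := List.nodup_cons.1 hL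
    have sum_apply_eq_zero : (L.map fun l ↦ Finsupp.single l (i l)).sum j = 0 := by
      rw [← Finsupp.applyAddHom_apply, map_list_sum, List.map_map]
      refine List.sum_eq_zero fun x hx ↦ ?_
      obtain ⟨l, hl, rfl⟩ := List.mem_map.1 hx
      exact Finsupp.single_eq_of_ne (ne_of_mem_of_not_mem hl hj).symm
    rw [List.foldr_cons, ih hL, hasseDerivAt_monomial, Finsupp.tsub_apply,
      sum_apply_eq_zero, tsub_zero, tsub_tsub, List.map_cons, List.sum_cons, List.map_cons,
      List.prod_cons, add_comm, mul_assoc, mul_comm (List.prod _)]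

theorem multiHasseDeriv_monomial (i a : Fin m →₀ ℕ) (c : R) :
    multiHasseDeriv i (MvPolynomial.monomial a c) =
      MvPolynomial.monomial (a - i) (c * ∏ j, ((a j).choose (i j) : R)) := by
  rw [multiHasseDeriv, foldr_hasseDerivAt_monomial i a c (List.nodup_finRange m),
    ← Fin.sum_univ_def, ← Fin.prod_univ_def, Finsupp.univ_sum_single]

theorem multiHasseDeriv_add (i : Fin m → ℕ) (f g : MvPolynomial (Fin m) R) :
    multiHasseDeriv i (f + g) = multiHasseDeriv i f + multiHasseDeriv i g := by
  unfold multiHasseDeriv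
  induction List.finRange m with
  | nil => rfl
  | cons j L ih =>
    rw [List.foldr_cons, ih, hasseDerivAt, hasseDeriv_add]
    rfl

/-- The Taylor expansion `f(x_1 + y_1, …, x_m + y_m)`, as an algebra homomorphism in `f` with
values in polynomials in the `y_i` whose coefficients are polynomials in the `x_i`. -/
noncomputable def multiTaylor :
    MvPolynomial (Fin m) R →ₐ[R] MvPolynomial (Fin m) (MvPolynomial (Fin m) R) :=
  MvPolynomial.aeval fun i ↦ MvPolynomial.X i + MvPolynomial.C (MvPolynomial.X i)

theorem multiTaylor_monomial (a : Fin m →₀ ℕ) (c : R) :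
    multiTaylor (MvPolynomial.monomial a c) =
      ∑ i ∈ Finset.Iic a, MvPolynomial.monomial i
        (MvPolynomial.monomial (a - i) (c * ∏ j, ((a j).choose (i j) : R))) := by
  have summand_eq (i : Fin m →₀ ℕ) : MvPolynomial.monomial i
      (MvPolynomial.monomial (a - i) (c * ∏ j, ((a j).choose (i j) : R))) =
        MvPolynomial.C (MvPolynomial.C c) * ∏ j, MvPolynomial.X j ^ i j *
          MvPolynomial.C (MvPolynomial.X j) ^ (a j - i j) *
            ((a j).choose (i j) : MvPolynomial (Fin m) (MvPolynomial (Fin m) R)) := by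
    simp only [MvPolynomial.monomial_eq (s := i), MvPolynomial.monomial_eq (s := a - i),
      Finsupp.prod_pow, Finsupp.tsub_apply, Finset.prod_mul_distrib, map_mul, map_prod, map_pow,
      map_natCast]
    ring
  simp only [summand_eq, ← Finset.mul_sum]
  rw [multiTaylor, MvPolynomial.aeval_monomial, Finsupp.prod_pow]
  simp only [add_pow, Finset.prod_univ_sum]
  congr 1
  refine Finset.sum_equiv Finsupp.equivFunOnFinite.symm (fun i ↦ ?_) fun i _ ↦ rfl
  simp [Finsupp.le_def]

theorem coeff_multiTaylor (i : Fin m →₀ ℕ) (f : MvPolynomial (Fin m) R) :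
    (multiTaylor f).coeff i = multiHasseDeriv i f := by
  induction f using MvPolynomial.induction_on' with
  | add f g hf hg => rw [map_add, MvPolynomial.coeff_add, hf, hg, multiHasseDeriv_add]
  | monomial a c =>
    rw [multiTaylor_monomial, MvPolynomial.coeff_sum, multiHasseDeriv_monomial]
    simp only [MvPolynomial.coeff_monomial, Finset.sum_ite_eq', Finset.mem_Iic]
    split_ifs with hia
    · rfl
    · obtain ⟨j, hj⟩ : ∃ j, a j < i j := by simpa [Finsupp.le_def] using hia
      rw [Finset.prod_eq_zero (Finset.mem_univ j) (by simp [Nat.choose_eq_zero_of_lt hj]),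
        mul_zero, map_zero]

theorem finite_setOfPred_multiHasseDeriv_ne_zero (f : MvPolynomial (Fin m) R) :
    {i : Fin m → ℕ | multiHasseDeriv i f ≠ 0}.Finite := by
  refine ((multiTaylor f).support.finite_toSet.image (⇑)).subset fun i hi ↦
    ⟨Finsupp.equivFunOnFinite.symm i, ?_, rfl⟩
  simpa [coeff_multiTaylor] using hi

variable {A : Type*} [CommRing A] [Algebra R A]

theorem aeval_add_eq_finsum (x h : Fin m → A) (f : MvPolynomial (Fin m) R) :
    MvPolynomial.aeval (x + h) f =
      ∑ᶠ i : Fin m → ℕ, (∏ j, h j ^ i j) * MvPolynomial.aeval x (multiHasseDeriv i f) := by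
  have substitution :
      (MvPolynomial.aevalTower (MvPolynomial.aeval x) h).comp multiTaylor =
        MvPolynomial.aeval (R := R) (x + h) := by
    ext i
    simp [multiTaylor, add_comm]
  rw [← substitution, AlgHom.comp_apply, MvPolynomial.aevalTower, AlgHom.coe_mk,
    MvPolynomial.coe_eval₂Hom, MvPolynomial.eval₂_eq', ← finsum_comp_equiv Finsupp.equivFunOnFinite,
    finsum_eq_sum_of_support_subset (s := (multiTaylor f).support)]
  · refine Finset.sum_congr rfl fun i _ ↦ ?_
    rw [mul_comm, coeff_multiTaylor]
    rfl
  · intro i hi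
    have coeff_ne_zero : multiHasseDeriv i f ≠ 0 := fun h0 ↦
      hi (by simp [Finsupp.equivFunOnFinite, h0])
    simpa [coeff_multiTaylor] using coeff_ne_zero

variable {ι : Type*} [Fintype ι]

theorem hasFiniteSupport_mul_aeval_multiHasseDeriv_sum (w : (ι → Fin m → ℕ) → A) (x : Fin m → A)
    (f : MvPolynomial (Fin m) R) :
    (fun ℓ ↦ w ℓ * MvPolynomial.aeval x
      (multiHasseDeriv (fun i ↦ ∑ j, ℓ j i) f)).HasFiniteSupport :=
  (finite_setOfPred_sum_mem (finite_setOfPred_multiHasseDeriv_ne_zero f)).subset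
    fun ℓ hℓ h0 ↦ hℓ (by simp [h0])

theorem aeval_add_sum_eq_finsum (x : Fin m → A) (s : ι → Fin m → A)
    (f : MvPolynomial (Fin m) R) :
    MvPolynomial.aeval (fun i ↦ x i + ∑ j, s j i) f =
      ∑ᶠ ℓ : ι → Fin m → ℕ,
        (∏ j, ∏ i, s j i ^ ℓ j i) * (∏ i, (Nat.multinomial Finset.univ fun j ↦ ℓ j i : A)) *
          MvPolynomial.aeval x (multiHasseDeriv (fun i ↦ ∑ j, ℓ j i) f) := by
  rw [finsum_fiberwise (fun ℓ i ↦ ∑ j, ℓ j i)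
    (hasFiniteSupport_mul_aeval_multiHasseDeriv_sum _ x f)]
  refine (aeval_add_eq_finsum x (fun i ↦ ∑ j, s j i) f).trans (finsum_congr fun e ↦ ?_)
  have finite_fiber : {ℓ : ι → Fin m → ℕ | (fun i ↦ ∑ j, ℓ j i) = e}.Finite :=
    finite_setOfPred_sum_mem (Set.finite_singleton e)
  rw [prod_sum_pow_eq_finsum_multinomial]
  refine (finsum_mem_mul' _ _ finite_fiber).trans ?_
  exact finsum_congr fun ℓ ↦ finsum_congr fun hℓ ↦ by rw [← hℓ]

end MultiTaylor

/-- **Chain rule / Faà di Bruno for Hasse derivatives.**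
`∂_{u^k}(f(g_1,…,g_n))` is the sum, over all tuples `(ℓ_1,…,ℓ_k)` of multi-indices with
`Σ_j j·|ℓ_j| = k`, of
`[∏_j ∏_i (∂_{u^j} g_i)^{ℓ_{j,i}}] · [∏_i multinomial(ℓ_{1,i},…,ℓ_{k,i})] ·
(∂_{x^{ℓ_1+⋯+ℓ_k}} f)(g)`.
(Here the index `j : Fin k` stands for `j+1 ∈ {1,…,k}`.) -/
theorem hasseDeriv_chain_rule {R : Type*} [CommRing R] {n p : ℕ}
    (f : MvPolynomial (Fin n) R) (g : Fin n → MvPolynomial (Fin p) R)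
    (u : Fin p → R) (k : ℕ) (hk : 1 ≤ k) :
    hasseDeriv u k (MvPolynomial.aeval g f) =
      ∑ᶠ (ℓ : Fin k → Fin n → ℕ)
        (_ : ∑ j : Fin k, ((j : ℕ) + 1) * (∑ i : Fin n, ℓ j i) = k),
        (∏ j : Fin k, ∏ i : Fin n, hasseDeriv u ((j : ℕ) + 1) (g i) ^ ℓ j i) *
          (∏ i : Fin n,
            (Nat.multinomial Finset.univ (fun j : Fin k => ℓ j i) :
              MvPolynomial (Fin p) R)) *
          MvPolynomial.aeval g (multiHasseDeriv (fun i : Fin n => ∑ j : Fin k, ℓ j i) f) := by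
  rw [hasseDeriv_aeval_eq_coeff_aeval, aeval_add_sum_eq_finsum, ← Polynomial.lcoeff_apply,
    map_finsum _ (hasFiniteSupport_mul_aeval_multiHasseDeriv_sum _ _ f)]
  refine finsum_congr fun ℓ ↦ ?_
  have aeval_C (q : MvPolynomial (Fin n) R) : MvPolynomial.aeval (fun i ↦ Polynomial.C (g i)) q =
      Polynomial.C (MvPolynomial.aeval g q) :=
    MvPolynomial.aeval_algebraMap_apply _ g q
  rw [finsum_eq_if, Polynomial.lcoeff_apply, prod_C_mul_X_pow_pow, aeval_C]
  simp only [← map_natCast Polynomial.C, ← map_prod, Polynomial.coeff_mul_C,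
    Polynomial.coeff_C_mul_X_pow, ite_mul, zero_mul, eq_comm]
end

section
/- Let F be a field and let f = Σ_{ℓ=1}^{s} ∏_{j=1}^{n} L_{ℓ,j}^{e_{ℓ,j}} ∈ F[x_1,…,x_m], where each L_{ℓ,j} ∈ F[x_1,…,x_m] has total degree at most 1 and each e_ℓ = (e_{ℓ,1},…,e_{ℓ,n}) ∈ ℕ^n (f is a depth-3 diagonal circuit). Then |∂(f)| ≤ Σ_{ℓ=1}^{s} ∏_{j=1}^{n} (e_{ℓ,j} + 1). -/
/-- `|∂(f)|`, the dimension of the span of all iterated Hasse derivatives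
`∂_{x^i}(f)`, `i ∈ ℕ^m`. -/
noncomputable def hasseDim {F : Type*} [Field F] {m : ℕ} (f : MvPolynomial (Fin m) F) : ℕ :=
  Module.finrank F
    (Submodule.span F (Set.range fun i : Fin m → ℕ => multiHasseDeriv i f))

section

open MvPolynomial

theorem eq_C_add_sum_of_totalDegree_le_one {R σ : Type*} [CommSemiring R] [Fintype σ]
    {p : MvPolynomial σ R} (hp : p.totalDegree ≤ 1) :
    p = C (p.coeff 0) + ∑ i, C (p.coeff (Finsupp.single i 1)) * X i := by
  classical
  ext d
  obtain hd | hd := le_or_gt d.degree 1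
  · obtain hd | hd := Nat.le_one_iff_eq_zero_or_eq_one.mp hd
    · obtain rfl := (Finsupp.degree_eq_zero_iff d).mp hd
      simp [coeff_sum]
    · obtain ⟨i, rfl⟩ := (Finsupp.sum_eq_one_iff d).mp hd
      have hi : (0 : σ →₀ ℕ) ≠ Finsupp.single i 1 := (Finsupp.single_ne_zero.mpr one_ne_zero).symm
      simp [coeff_sum, coeff_X, coeff_C, Finsupp.single_left_inj, hi]
  · have hd0 : d ≠ 0 := by rintro rfl; simp at hd
    have hd1 (i : σ) : Finsupp.single i 1 ≠ d := by rintro rfl; simp at hd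
    simp [coeff_sum, coeff_C, coeff_X, hd0.symm, hd1,
      coeff_eq_zero_of_totalDegree_lt (hp.trans_lt hd)]

theorem prod_span_range {R A ι : Type*} [CommSemiring R] [CommSemiring A] [Algebra R A] [Fintype ι]
    {α : ι → Type*} (g : ∀ j, α j → A) :
    ∏ j, Submodule.span R (Set.range (g j)) =
      Submodule.span R (Set.range fun t : ∀ j, α j => ∏ j, g j (t j)) := by
  rw [Submodule.prod_span, ← Set.image_fintype_prod_pi, ← Set.range_piMap, ← Set.range_comp]
  rfl

theorem rank_span_range_le_card {R M ι : Type*} [Ring R] [StrongRankCondition R] [AddCommGroup M]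
    [Module R M] [Fintype ι] (v : ι → M) :
    Module.rank R (Submodule.span R (Set.range v)) ≤ Fintype.card ι := by
  classical
  rw [← Set.image_univ, ← Finset.coe_univ, ← Finset.coe_image]
  exact (rank_span_finset_le _).trans (Nat.cast_le.mpr Finset.card_image_le)

/-- The span of the powers `1, a, …, a ^ d`. -/
def powerSpan (R : Type*) {A : Type*} [CommSemiring R] [Semiring A] [Algebra R A] (a : A) (d : ℕ) :
    Submodule R A :=
  Submodule.span R (Set.range fun t : Fin (d + 1) => a ^ (t : ℕ))

theorem pow_mem_powerSpan {R A : Type*} [CommSemiring R] [Semiring A] [Algebra R A] (a : A)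
    {k d : ℕ} (h : k ≤ d) : a ^ k ∈ powerSpan R a d :=
  Submodule.subset_span ⟨⟨k, Nat.lt_succ_of_le h⟩, rfl⟩

theorem prod_pow_mem_prod_powerSpan {R A ι : Type*} [CommSemiring R] [CommSemiring A] [Algebra R A]
    [Fintype ι] (a : ι → A) (e : ι → ℕ) : ∏ j, a j ^ e j ∈ ∏ j, powerSpan R (a j) (e j) := by
  simp only [powerSpan, prod_span_range]
  exact Submodule.subset_span ⟨fun j => Fin.last (e j), rfl⟩

theorem rank_iSup_prod_powerSpan_le {R A ι : Type*} [CommRing R] [Nontrivial R] [CommRing A]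
    [Algebra R A] [Fintype ι] {κ : ι → Type*} [∀ i, Fintype (κ i)] (a : ∀ i, κ i → A)
    (e : ∀ i, κ i → ℕ) :
    Module.rank R ↥(⨆ i, ∏ j, powerSpan R (a i j) (e i j)) ≤
      ((∑ i, ∏ j, (e i j + 1) : ℕ) : Cardinal) := by
  classical
  have hspan : ⨆ i, ∏ j, powerSpan R (a i j) (e i j) = Submodule.span R
      (Set.range fun t : Σ i, ∀ j, Fin (e i j + 1) => ∏ j, a t.1 j ^ (t.2 j : ℕ)) := by
    simp only [powerSpan, prod_span_range, Set.range_sigma_eq_iUnion_range, Submodule.span_iUnion]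
  rw [hspan]
  refine (rank_span_range_le_card _).trans_eq ?_
  simp only [Fintype.card_sigma, Fintype.card_pi, Fintype.card_fin]

variable {R : Type*} [CommRing R] {m : ℕ}

/-- The substitution `f ↦ f(x + u y)`, as an algebra homomorphism into polynomials in `y` over
`R[x]`; its coefficients are the Hasse derivatives in direction `u`. -/
noncomputable def hasseExpansion (u : Fin m → R) :
    MvPolynomial (Fin m) R →ₐ[R] Polynomial (MvPolynomial (Fin m) R) :=
  aeval fun i => Polynomial.C (X i) + Polynomial.C (C (u i)) * Polynomial.X

/-- The Hasse derivative `hasseDeriv u k`, bundled as a linear map. -/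
noncomputable def hasseDerivLinear (u : Fin m → R) (k : ℕ) :
    MvPolynomial (Fin m) R →ₗ[R] MvPolynomial (Fin m) R :=
  (Polynomial.lcoeff (MvPolynomial (Fin m) R) k).restrictScalars R ∘ₗ
    (hasseExpansion u).toLinearMap

theorem hasseDerivLinear_apply (u : Fin m → R) (k : ℕ) (f : MvPolynomial (Fin m) R) :
    hasseDerivLinear u k f = (hasseExpansion u f).coeff k :=
  rfl

theorem coe_hasseDerivLinear (u : Fin m → R) (k : ℕ) :
    ⇑(hasseDerivLinear u k) = hasseDeriv u k :=
  rfl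

theorem hasseDerivLinear_mul (u : Fin m → R) (k : ℕ) (f g : MvPolynomial (Fin m) R) :
    hasseDerivLinear u k (f * g) =
      ∑ ij ∈ Finset.HasAntidiagonal.antidiagonal k,
        hasseDerivLinear u ij.1 f * hasseDerivLinear u ij.2 g := by
  simp only [hasseDerivLinear_apply, map_mul, Polynomial.coeff_mul]

theorem hasseDerivLinear_one (u : Fin m → R) (k : ℕ) :
    hasseDerivLinear u k 1 = if k = 0 then 1 else 0 := by
  rw [hasseDerivLinear_apply, map_one, Polynomial.coeff_one]

theorem exists_hasseExpansion_eq_of_totalDegree_le_one (u : Fin m → R)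
    {p : MvPolynomial (Fin m) R} (hp : p.totalDegree ≤ 1) :
    ∃ c : R, hasseExpansion u p = Polynomial.C (C c) * Polynomial.X + Polynomial.C p := by
  obtain ⟨a, b, rfl⟩ : ∃ (a : R) (b : Fin m → R), p = C a + ∑ i, C (b i) * X i :=
    ⟨_, _, eq_C_add_sum_of_totalDegree_le_one hp⟩
  refine ⟨∑ i, b i * u i, ?_⟩
  have hC (r : R) : hasseExpansion u (C r) = Polynomial.C (C r) := by
    rw [← algebraMap_eq, AlgHom.commutes]; rfl
  have hX (i : Fin m) : hasseExpansion u (X i) =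
      Polynomial.C (X i) + Polynomial.C (C (u i)) * Polynomial.X := aeval_X _ i
  simp only [map_add, map_sum, map_mul, hC, hX, mul_add, Finset.sum_add_distrib, Finset.sum_mul,
    mul_assoc]
  ring

theorem hasseDerivLinear_pow_of_hasseExpansion_eq {u : Fin m → R} {p : MvPolynomial (Fin m) R}
    {c : R} (hc : hasseExpansion u p = Polynomial.C (C c) * Polynomial.X + Polynomial.C p)
    (t k : ℕ) : hasseDerivLinear u k (p ^ t) = (c ^ k * t.choose k) • p ^ (t - k) := by
  have hpow : (Polynomial.C (C c) * Polynomial.X + Polynomial.C p) ^ t =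
      ∑ r ∈ Finset.range (t + 1),
        Polynomial.C ((c ^ r * t.choose r) • p ^ (t - r)) * Polynomial.X ^ r := by
    rw [add_pow]
    refine Finset.sum_congr rfl fun r _ => ?_
    simp only [smul_eq_C_mul, map_mul, map_pow, map_natCast, mul_pow]
    ring
  rw [hasseDerivLinear_apply, map_pow, hc, hpow, Polynomial.finsetSum_coeff]
  simp only [Polynomial.coeff_C_mul_X_pow, Finset.sum_ite_eq, Finset.mem_range, ite_eq_left_iff]
  intro hk
  rw [Nat.choose_eq_zero_of_lt (by omega), Nat.cast_zero, mul_zero, zero_smul]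

/-- A space of polynomials closed under the Hasse derivatives of all orders in all directions. -/
def IsHasseInvariant (W : Submodule R (MvPolynomial (Fin m) R)) : Prop :=
  ∀ u k, W ≤ W.comap (hasseDerivLinear u k)

namespace IsHasseInvariant

theorem one : IsHasseInvariant (1 : Submodule R (MvPolynomial (Fin m) R)) := by
  intro u k
  rw [Submodule.one_eq_span, Submodule.span_singleton_le_iff_mem, Submodule.mem_comap,
    hasseDerivLinear_one]
  split_ifs
  · exact Submodule.mem_span_singleton_self 1
  · exact zero_mem _

theorem mul {V W : Submodule R (MvPolynomial (Fin m) R)} (hV : IsHasseInvariant V)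
    (hW : IsHasseInvariant W) : IsHasseInvariant (V * W) := by
  intro u k
  rw [Submodule.mul_le]
  intro f hf g hg
  rw [Submodule.mem_comap, hasseDerivLinear_mul]
  exact Submodule.sum_mem _ fun ij _ => Submodule.mul_mem_mul (hV u ij.1 hf) (hW u ij.2 hg)

theorem prod {ι : Type*} {W : ι → Submodule R (MvPolynomial (Fin m) R)} {s : Finset ι}
    (hW : ∀ i ∈ s, IsHasseInvariant (W i)) : IsHasseInvariant (∏ i ∈ s, W i) :=
  Finset.prod_induction W IsHasseInvariant (fun _ _ => mul) one hW

theorem iSup {ι : Sort*} {W : ι → Submodule R (MvPolynomial (Fin m) R)}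
    (hW : ∀ i, IsHasseInvariant (W i)) : IsHasseInvariant (⨆ i, W i) := fun u k =>
  iSup_le fun i => (hW i u k).trans (Submodule.comap_mono (le_iSup W i))

theorem powerSpan {p : MvPolynomial (Fin m) R} (hp : p.totalDegree ≤ 1) (d : ℕ) :
    IsHasseInvariant (powerSpan R p d) := by
  intro u k
  refine Submodule.span_le.mpr ?_
  rintro _ ⟨t, rfl⟩
  obtain ⟨c, hc⟩ := exists_hasseExpansion_eq_of_totalDegree_le_one u hp
  rw [SetLike.mem_coe, Submodule.mem_comap, hasseDerivLinear_pow_of_hasseExpansion_eq hc]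
  exact Submodule.smul_mem _ _ (pow_mem_powerSpan p (by omega))

theorem multiHasseDeriv_mem {W : Submodule R (MvPolynomial (Fin m) R)} (hW : IsHasseInvariant W)
    {f : MvPolynomial (Fin m) R} (hf : f ∈ W) (i : Fin m → ℕ) : multiHasseDeriv i f ∈ W := by
  unfold multiHasseDeriv
  induction List.finRange m with
  | nil => exact hf
  | cons j _ ih =>
    rw [List.foldr_cons, hasseDerivAt, ← coe_hasseDerivLinear]
    exact hW (Pi.single j 1) (i j) ih

end IsHasseInvariant

/-- A bound on `Module.rank` also says that the span has finite rank; one on `Module.finrank`, which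
is `0` in infinite rank, would not. -/
theorem hasseDim_diagonal_le_general [Nontrivial R] {ι : Type*} [Fintype ι] {κ : ι → Type*}
    [∀ ℓ, Fintype (κ ℓ)] (L : ∀ ℓ, κ ℓ → MvPolynomial (Fin m) R)
    (hL : ∀ ℓ j, (L ℓ j).totalDegree ≤ 1) (e : ∀ ℓ, κ ℓ → ℕ) :
    Module.rank R (Submodule.span R (Set.range fun i : Fin m → ℕ =>
        multiHasseDeriv i (∑ ℓ, ∏ j, L ℓ j ^ e ℓ j))) ≤
      ((∑ ℓ, ∏ j, (e ℓ j + 1) : ℕ) : Cardinal) := by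
  let W := ⨆ ℓ, ∏ j, powerSpan R (L ℓ j) (e ℓ j)
  have hW : IsHasseInvariant W := .iSup fun ℓ => .prod fun j _ => .powerSpan (hL ℓ j) (e ℓ j)
  have hmem : ∑ ℓ, ∏ j, L ℓ j ^ e ℓ j ∈ W := Submodule.sum_mem _ fun ℓ _ =>
    Submodule.mem_iSup_of_mem ℓ (prod_pow_mem_prod_powerSpan _ _)
  have hspan : Submodule.span R (Set.range fun i : Fin m → ℕ =>
      multiHasseDeriv i (∑ ℓ, ∏ j, L ℓ j ^ e ℓ j)) ≤ W :=
    Submodule.span_le.mpr (Set.range_subset_iff.mpr (hW.multiHasseDeriv_mem hmem))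
  exact (Submodule.rank_mono hspan).trans (rank_iSup_prod_powerSpan_le L e)

end

/-- For a depth-3 diagonal circuit
`f = Σ_{ℓ=1}^{s} ∏_{j=1}^{n} L_{ℓ,j}^{e_{ℓ,j}}` with each `L_{ℓ,j}` of total degree ≤ 1,
`|∂(f)| ≤ Σ_ℓ ∏_j (e_{ℓ,j} + 1)`. -/
theorem hasseDim_diagonal_le {F : Type*} [Field F] {m : ℕ} (s n : ℕ)
    (L : Fin s → Fin n → MvPolynomial (Fin m) F)
    (hL : ∀ ℓ j, (L ℓ j).totalDegree ≤ 1)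
    (e : Fin s → Fin n → ℕ) :
    hasseDim (∑ ℓ : Fin s, ∏ j : Fin n, L ℓ j ^ e ℓ j) ≤
      ∑ ℓ : Fin s, ∏ j : Fin n, (e ℓ j + 1) :=
  Module.finrank_le_of_rank_le (hasseDim_diagonal_le_general L hL e)
end
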